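/- Let n ≥ 1 be an integer, Ω ⊂ ℝⁿ a bounded open set, T > 0, x₀ ∈ ℝⁿ \ cl(Ω), and β ∈ (0,1) with sup_{x∈Ω}|x−x₀| < βT. Let C₀ > 0 be such that ψ ≥ 1 on Ω × (−T,T), where ψ(x,t) = |x−x₀|² − βt² + C₀. Then there exists λ > 0, independent of m, such that for every m > 0 there exist s₀(m) > 0 and M(m) > 0 with the following property: with φ = e^{λψ}, for every measurable potential p : Ω × (−T,T) → ℝ with |p| ≤ m almost everywhere, every s ≥ s₀(m), and every smooth function z : ℝⁿ × ℝ → ℝ vanishing for x outside a compact subset of Ω and satisfying z(x,0) = 0 for all x ∈ Ω: s^{1/2} ∫_Ω e^{2sφ(x,0)} |∂ₜz(x,0)|² dx ≤ M ∫_{−T}^{T} ∫_Ω e^{2sφ} |∂ₜ²z − Δz + pz|² dx dt. -/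

import Mathlib

open MeasureTheory Real Set
open scoped RealInnerProductSpace

/-- The Laplacian of a real-valued function on Euclidean space. -/
noncomputable def lap {n : ℕ} (f : EuclideanSpace ℝ (Fin n) → ℝ) (x : EuclideanSpace ℝ (Fin n)) : ℝ :=
  ∑ i : Fin n, fderiv ℝ (fun y => fderiv ℝ f y (EuclideanSpace.single i 1)) x (EuclideanSpace.single i 1)

/-- The weight `ψ(x,t) = |x - x₀|² - β t² + C₀`. -/
noncomputable def psi {n : ℕ} (x₀ : EuclideanSpace ℝ (Fin n)) (β C₀ : ℝ)
    (x : EuclideanSpace ℝ (Fin n)) (t : ℝ) : ℝ :=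
  ‖x - x₀‖ ^ 2 - β * t ^ 2 + C₀

/-- The Carleman weight `φ = e^{λψ}`. -/
noncomputable def phi {n : ℕ} (x₀ : EuclideanSpace ℝ (Fin n)) (β C₀ l : ℝ)
    (x : EuclideanSpace ℝ (Fin n)) (t : ℝ) : ℝ :=
  Real.exp (l * psi x₀ β C₀ x t)

/-!
Conjugating the wave operator with `e^{sφ}` turns `z` into `w = e^{sφ} z`, and `e^{sφ} □ z` into
`Pw + Qw` plus lower order terms, with `P` symmetric and `Q` skew up to order zero. In
`(Pw + Qw)² ≥ (Pw)² + 2 Pw Qw` the cross term is a space-time divergence plus a bulk term, which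
for `β < 1` and `λ` large controls `s (|∂ₜw|² + |∇w|²) + s³ w²`. On the time interval `(0, T)` the
flux of the divergence vanishes at `t = 0` because `z(·, 0) = 0`, and is nonnegative at `t = T`
because `|x - x₀| < βT` on `Ω`. Pairing `Pw` with `(T - t) ∂ₜw` then recovers
`s^{1/2} ∫ |∂ₜw(x, 0)|²` from `(Pw)²` and the bulk. The potential and the other terms of order zero
are absorbed by `s³ w²` once `s` is large, so that only the threshold for `s` depends on `m`.
-/

open scoped ContDiff

section DirectionalDerivative

variable {F : Type*} [NormedAddCommGroup F] [NormedSpace ℝ F] {u w : F → ℝ} {v q : F}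

/-- The derivative of `u` at `q` in the direction `v`, with the direction first so that the
coordinate derivatives `∂ₜ`, `∂[i]` of functions on space-time are operators. -/
noncomputable def dirDeriv (v : F) (u : F → ℝ) (q : F) : ℝ := fderiv ℝ u q v

@[fun_prop]
theorem contDiff_dirDeriv (hu : ContDiff ℝ ∞ u) (v : F) : ContDiff ℝ ∞ (dirDeriv v u) :=
  (hu.fderiv_right (by simp)).clm_apply contDiff_const

@[fun_prop]
theorem differentiableAt_of_contDiff (hu : ContDiff ℝ ∞ u) : DifferentiableAt ℝ u q :=
  hu.differentiable (by simp) q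

theorem dirDeriv_const (c : ℝ) : dirDeriv v (fun _ => c) q = 0 := by simp [dirDeriv]

theorem dirDeriv_neg : dirDeriv v (fun q => -u q) q = -dirDeriv v u q := by
  simp [dirDeriv, fderiv_fun_neg]

theorem dirDeriv_add (hu : DifferentiableAt ℝ u q) (hw : DifferentiableAt ℝ w q) :
    dirDeriv v (fun q => u q + w q) q = dirDeriv v u q + dirDeriv v w q := by
  simp [dirDeriv, fderiv_fun_add hu hw]

theorem dirDeriv_sub (hu : DifferentiableAt ℝ u q) (hw : DifferentiableAt ℝ w q) :
    dirDeriv v (fun q => u q - w q) q = dirDeriv v u q - dirDeriv v w q := by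
  simp [dirDeriv, fderiv_fun_sub hu hw]

theorem dirDeriv_mul (hu : DifferentiableAt ℝ u q) (hw : DifferentiableAt ℝ w q) :
    dirDeriv v (fun q => u q * w q) q = dirDeriv v u q * w q + u q * dirDeriv v w q := by
  simp [dirDeriv, fderiv_fun_mul hu hw]; ring

theorem dirDeriv_const_mul (hu : DifferentiableAt ℝ u q) (c : ℝ) :
    dirDeriv v (fun q => c * u q) q = c * dirDeriv v u q := by
  simp [dirDeriv, fderiv_const_mul hu]

theorem dirDeriv_pow (hu : DifferentiableAt ℝ u q) (k : ℕ) :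
    dirDeriv v (fun q => u q ^ k) q = k * u q ^ (k - 1) * dirDeriv v u q := by
  simp [dirDeriv, fderiv_fun_pow k hu]

theorem dirDeriv_exp (hu : DifferentiableAt ℝ u q) :
    dirDeriv v (fun q => exp (u q)) q = exp (u q) * dirDeriv v u q := by
  simp [dirDeriv, fderiv_exp hu]

theorem dirDeriv_sum {ι : Type*} {u : ι → F → ℝ} {S : Finset ι}
    (hu : ∀ i ∈ S, DifferentiableAt ℝ (u i) q) :
    dirDeriv v (fun q => ∑ i ∈ S, u i q) q = ∑ i ∈ S, dirDeriv v (u i) q := by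
  simp [dirDeriv, fderiv_fun_sum hu]

theorem dirDeriv_comm (hu : ContDiff ℝ ∞ u) (v v' : F) :
    dirDeriv v (dirDeriv v' u) = dirDeriv v' (dirDeriv v u) := by
  have hd : Differentiable ℝ (fderiv ℝ u) :=
    (hu.fderiv_right (m := ∞) (by simp)).differentiable (by simp)
  have iterated (a b q : F) : dirDeriv a (dirDeriv b u) q = fderiv ℝ (fderiv ℝ u) q a b := by
    unfold dirDeriv
    simp [fderiv_clm_apply (hd q) (differentiableAt_const b)]
  ext q
  rw [iterated, iterated]
  exact (hu.contDiffAt.isSymmSndFDerivAt (by simpa using ENat.LEInfty.out)).eq v v'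

end DirectionalDerivative

section Support

variable {X : Type*} {K : Set X} {w : X × ℝ → ℝ}

/-- `u` vanishes at all space-time points whose space coordinate is outside `K`. -/
def SupportedOver (K : Set X) (u : X × ℝ → ℝ) : Prop := ∀ q, q.1 ∉ K → u q = 0

theorem SupportedOver.mul_left (hw : SupportedOver K w) (u : X × ℝ → ℝ) :
    SupportedOver K (fun q => u q * w q) := fun q hq => by simp [hw q hq]

theorem SupportedOver.dirDeriv {E : Type*} [NormedAddCommGroup E] [NormedSpace ℝ E] {K : Set E}
    {u : E × ℝ → ℝ} (hu : SupportedOver K u) (hK : IsClosed K) (v : E × ℝ) :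
    SupportedOver K (dirDeriv v u) := fun q hq => by
  have hzero : u =ᶠ[nhds q] fun _ => 0 :=
    Filter.eventually_of_mem ((hK.isOpen_compl.preimage continuous_fst).mem_nhds hq) hu
  simp [_root_.dirDeriv, hzero.fderiv_eq]

end Support

section Slices

variable {E : Type*} [NormedAddCommGroup E] [NormedSpace ℝ E] {u : E × ℝ → ℝ}

theorem hasDerivAt_timeSlice (hu : ContDiff ℝ ∞ u) (x : E) (t : ℝ) :
    HasDerivAt (fun τ => u (x, τ)) (dirDeriv (0, 1) u (x, t)) t :=
  (differentiableAt_of_contDiff hu).hasFDerivAt.comp_hasDerivAt t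
    ((hasDerivAt_const t x).prodMk (hasDerivAt_id t))

theorem fderiv_spaceSlice (hu : ContDiff ℝ ∞ u) (x e : E) (t : ℝ) :
    fderiv ℝ (fun y => u (y, t)) x e = dirDeriv (e, 0) u (x, t) := by
  have hslice : HasFDerivAt (fun y => u (y, t)) _ x :=
    (differentiableAt_of_contDiff hu).hasFDerivAt.comp x (hasFDerivAt_prodMk_left x t)
  simp [hslice.fderiv, dirDeriv]

end Slices

section Integration

theorem integrableOn_of_continuous {X : Type*} [MetricSpace X] [ProperSpace X]
    [MeasurableSpace X] [OpensMeasurableSpace X] {ν : Measure X} [IsFiniteMeasureOnCompacts ν]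
    {f : X → ℝ} (hf : Continuous f) {S : Set X} (hS : Bornology.IsBounded S) :
    IntegrableOn f S ν :=
  (hf.continuousOn.integrableOn_compact hS.isCompact_closure).mono_set subset_closure

variable {E : Type*} [NormedAddCommGroup E] [NormedSpace ℝ E] [MeasurableSpace E] [BorelSpace E]
  {μ : Measure E} {Ω K : Set E} {u : E × ℝ → ℝ}

theorem setIntegral_timeDeriv [ProperSpace E] [IsFiniteMeasureOnCompacts μ] [SFinite μ]
    (hu : ContDiff ℝ ∞ u) (hΩ : Bornology.IsBounded Ω) {a b : ℝ} (hab : a ≤ b) :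
    ∫ q in Ω ×ˢ Ioo a b, dirDeriv (0, 1) u q ∂(μ.prod volume) =
      ∫ x in Ω, u (x, b) ∂μ - ∫ x in Ω, u (x, a) ∂μ := by
  have hcont : Continuous (dirDeriv (0, 1) u) := by fun_prop
  have hint (t : ℝ) : IntegrableOn (fun x => u (x, t)) Ω μ :=
    integrableOn_of_continuous (by fun_prop) hΩ
  rw [setIntegral_prod _ (integrableOn_of_continuous hcont
    (hΩ.prod (Metric.isBounded_Ioo a b))), ← integral_sub (hint b) (hint a)]
  congr 1 with x
  rw [← integral_Ioc_eq_integral_Ioo, ← intervalIntegral.integral_of_le hab]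
  exact intervalIntegral.integral_eq_sub_of_hasDerivAt (fun t _ => hasDerivAt_timeSlice hu x t)
    (Continuous.intervalIntegrable (by fun_prop) a b)

theorem setIntegral_spaceDeriv [FiniteDimensional ℝ E] [μ.IsAddHaarMeasure]
    (hu : ContDiff ℝ ∞ u) (hK : IsCompact K) (huK : SupportedOver K u) (hKΩ : K ⊆ Ω)
    (hΩ : Bornology.IsBounded Ω) (e : E) (a b : ℝ) :
    ∫ q in Ω ×ˢ Ioo a b, dirDeriv (e, 0) u q ∂(μ.prod volume) = 0 := by
  have hcont : Continuous (dirDeriv (e, 0) u) := by fun_prop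
  have huK' : SupportedOver K (dirDeriv (e, 0) u) := huK.dirDeriv hK.isClosed _
  have hint {f : E × ℝ → ℝ} (hf : Continuous f) (hfK : SupportedOver K f) (t : ℝ) :
      Integrable (fun x => f (x, t)) μ :=
    Continuous.integrable_of_hasCompactSupport (by fun_prop)
      (HasCompactSupport.intro hK fun x hx => hfK (x, t) hx)
  have hslice (t : ℝ) : ∫ x in Ω, dirDeriv (e, 0) u (x, t) ∂μ = 0 := by
    rw [setIntegral_eq_integral_of_forall_compl_eq_zero fun x hx => huK' _ fun h => hx (hKΩ h)]
    have hparts := integral_mul_fderiv_eq_neg_fderiv_mul_of_integrable (𝕜 := ℝ) (μ := μ)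
      (f := fun _ => (1 : ℝ)) (g := fun x => u (x, t)) (v := e) (by simp)
      (by simpa only [one_mul, fderiv_spaceSlice hu] using hint hcont huK' t)
      (by simpa using hint hu.continuous huK t)
      (fun x _ => differentiableAt_const _) (fun x _ => differentiableAt_of_contDiff (by fun_prop))
    simpa only [one_mul, fderiv_spaceSlice hu, fderiv_fun_const, Pi.zero_apply,
      zero_apply, zero_mul, integral_zero, neg_zero] using hparts
  rw [← setIntegral_prod_swap, setIntegral_prod]
  · simp [hslice]
  · exact integrableOn_of_continuous (by fun_prop)
      ((Metric.isBounded_Ioo a b).prod hΩ)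

end Integration

/-- Space-time `ℝⁿ × ℝ`, space first, on which the wave operator acts. -/
abbrev SpaceTime (n : ℕ) : Type := EuclideanSpace ℝ (Fin n) × ℝ

local notation "∂ₜ" => dirDeriv (0, (1 : ℝ))
local notation "∂[" i "]" => dirDeriv (EuclideanSpace.single i (1 : ℝ), (0 : ℝ))

section VectorCalculus

variable {n : ℕ} {u w : SpaceTime n → ℝ} {q : SpaceTime n}

/-- Divergence of the space-time vector field with time component `N` and space components `V i`. -/
noncomputable def spacetimeDiv (N : SpaceTime n → ℝ) (V : Fin n → SpaceTime n → ℝ)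
    (q : SpaceTime n) : ℝ :=
  ∂ₜ N q + ∑ i, ∂[i] (V i) q

/-- Inner product `∇u · ∇w` of the spatial gradients; `|∇w|²` is `gradInner w w`. -/
noncomputable def gradInner (u w : SpaceTime n → ℝ) (q : SpaceTime n) : ℝ :=
  ∑ i, ∂[i] u q * ∂[i] w q

/-- The wave operator `□ = ∂ₜ² - Δ`. -/
noncomputable def box (w : SpaceTime n → ℝ) (q : SpaceTime n) : ℝ :=
  ∂ₜ (∂ₜ w) q - ∑ i, ∂[i] (∂[i] w) q

@[fun_prop]
theorem contDiff_gradInner (hu : ContDiff ℝ ∞ u) (hw : ContDiff ℝ ∞ w) :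
    ContDiff ℝ ∞ (gradInner u w) := by
  unfold gradInner; fun_prop

@[fun_prop]
theorem contDiff_box (hw : ContDiff ℝ ∞ w) : ContDiff ℝ ∞ (box w) := by
  unfold box; fun_prop

theorem gradInner_self_nonneg (w : SpaceTime n → ℝ) (q : SpaceTime n) : 0 ≤ gradInner w w q :=
  Finset.sum_nonneg fun _ _ => mul_self_nonneg _

theorem dirDeriv_gradInner_self (hw : ContDiff ℝ ∞ w) (v : SpaceTime n) :
    dirDeriv v (gradInner w w) q = 2 * gradInner w (dirDeriv v w) q := by
  unfold gradInner
  rw [dirDeriv_sum fun i _ => by fun_prop, Finset.mul_sum]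
  refine Finset.sum_congr rfl fun i _ => ?_
  rw [dirDeriv_mul (by fun_prop) (by fun_prop), dirDeriv_comm hw]
  ring

theorem box_const_mul (hu : ContDiff ℝ ∞ u) (c : ℝ) :
    box (fun q => c * u q) q = c * box u q := by
  have hfun (v : SpaceTime n) : dirDeriv v (fun q => c * u q) = fun q => c * dirDeriv v u q :=
    funext fun _ => dirDeriv_const_mul (by fun_prop) c
  simp (disch := fun_prop) only [box, hfun, dirDeriv_const_mul, mul_sub, Finset.mul_sum]

theorem dirDeriv_spaceCoord (v : SpaceTime n) (i : Fin n) :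
    dirDeriv v (fun q => q.1 i) q = v.1 i :=
  congrArg (· v) (((EuclideanSpace.proj (𝕜 := ℝ) i).comp
    (ContinuousLinearMap.fst ℝ (EuclideanSpace ℝ (Fin n)) ℝ)).fderiv)

theorem dirDeriv_time (v : SpaceTime n) : dirDeriv v (fun q => q.2) q = v.2 := by
  simp [dirDeriv, fderiv_snd]

theorem spacetimeDiv_add {N N' : SpaceTime n → ℝ} {V V' : Fin n → SpaceTime n → ℝ}
    (hN : DifferentiableAt ℝ N q) (hN' : DifferentiableAt ℝ N' q)
    (hV : ∀ i, DifferentiableAt ℝ (V i) q) (hV' : ∀ i, DifferentiableAt ℝ (V' i) q) :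
    spacetimeDiv (fun q => N q + N' q) (fun i q => V i q + V' i q) q =
      spacetimeDiv N V q + spacetimeDiv N' V' q := by
  simp only [spacetimeDiv, dirDeriv_add hN hN', dirDeriv_add (hV _) (hV' _),
    Finset.sum_add_distrib]
  ring

theorem setIntegral_spacetimeDiv {Ω K : Set (EuclideanSpace ℝ (Fin n))}
    {N : SpaceTime n → ℝ} {V : Fin n → SpaceTime n → ℝ}
    (hN : ContDiff ℝ ∞ N) (hV : ∀ i, ContDiff ℝ ∞ (V i)) (hK : IsCompact K)
    (hVK : ∀ i, SupportedOver K (V i)) (hKΩ : K ⊆ Ω) (hΩ : Bornology.IsBounded Ω) {a b : ℝ}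
    (hab : a ≤ b) :
    ∫ q in Ω ×ˢ Ioo a b, spacetimeDiv N V q = (∫ x in Ω, N (x, b)) - ∫ x in Ω, N (x, a) := by
  have hQ : Bornology.IsBounded (Ω ×ˢ Ioo a b) := hΩ.prod (Metric.isBounded_Ioo a b)
  have htime : ∫ q in Ω ×ˢ Ioo a b, ∂ₜ N q = (∫ x in Ω, N (x, b)) - ∫ x in Ω, N (x, a) :=
    setIntegral_timeDeriv hN hΩ hab
  have hspace (i : Fin n) : ∫ q in Ω ×ˢ Ioo a b, ∂[i] (V i) q = 0 :=
    setIntegral_spaceDeriv (hV i) hK (hVK i) hKΩ hΩ _ a b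
  simp only [spacetimeDiv]
  rw [integral_add (integrableOn_of_continuous (by fun_prop) hQ)
      (integrableOn_of_continuous (by fun_prop) hQ),
    integral_finsetSum _ fun i _ => integrableOn_of_continuous (by fun_prop) hQ, htime]
  simp [hspace]

end VectorCalculus

section Multiplier

variable {n : ℕ} {a f g w : SpaceTime n → ℝ} {q : SpaceTime n}

/-- The derivative `(x - x₀) · ∇w` along the radial field centred at `x₀`. -/
noncomputable def radialDeriv (x₀ : EuclideanSpace ℝ (Fin n)) (w : SpaceTime n → ℝ)
    (q : SpaceTime n) : ℝ :=
  ∑ i, (q.1 i - x₀ i) * ∂[i] w q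

/-- The multiplier `(x - x₀) · ∇w + β t ∂ₜw`, which is half of `∇ψ · ∇w - ∂ₜψ ∂ₜw`. -/
noncomputable def multiplier (x₀ : EuclideanSpace ℝ (Fin n)) (β : ℝ) (w : SpaceTime n → ℝ)
    (q : SpaceTime n) : ℝ :=
  radialDeriv x₀ w q + β * q.2 * ∂ₜ w q

variable (x₀ : EuclideanSpace ℝ (Fin n)) (β : ℝ)

@[fun_prop]
theorem contDiff_radialDeriv (hw : ContDiff ℝ ∞ w) : ContDiff ℝ ∞ (radialDeriv x₀ w) := by
  unfold radialDeriv; fun_prop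

@[fun_prop]
theorem contDiff_multiplier (hw : ContDiff ℝ ∞ w) : ContDiff ℝ ∞ (multiplier x₀ β w) := by
  unfold multiplier; fun_prop

theorem timeDeriv_radialDeriv (hw : ContDiff ℝ ∞ w) :
    ∂ₜ (radialDeriv x₀ w) q = radialDeriv x₀ (∂ₜ w) q := by
  unfold radialDeriv
  rw [dirDeriv_sum fun i _ => by fun_prop]
  refine Finset.sum_congr rfl fun i _ => ?_
  rw [dirDeriv_mul (by fun_prop) (by fun_prop), dirDeriv_sub (by fun_prop) (by fun_prop),
    dirDeriv_spaceCoord, dirDeriv_const, dirDeriv_comm hw]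
  simp

theorem spaceDeriv_radialDeriv (hw : ContDiff ℝ ∞ w) (i : Fin n) :
    ∂[i] (radialDeriv x₀ w) q = ∂[i] w q + radialDeriv x₀ (∂[i] w) q := by
  unfold radialDeriv
  rw [dirDeriv_sum fun j _ => by fun_prop]
  simp (disch := fun_prop) only [dirDeriv_mul, dirDeriv_sub, dirDeriv_spaceCoord, dirDeriv_const,
    Finset.sum_add_distrib]
  simp [dirDeriv_comm hw (EuclideanSpace.single i 1, 0)]

theorem spaceDeriv_multiplier (hw : ContDiff ℝ ∞ w) (i : Fin n) :
    ∂[i] (multiplier x₀ β w) q = ∂[i] w q + multiplier x₀ β (∂[i] w) q := by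
  unfold multiplier
  simp (disch := fun_prop) only [dirDeriv_add, dirDeriv_mul, dirDeriv_const, dirDeriv_time,
    spaceDeriv_radialDeriv, dirDeriv_comm hw (EuclideanSpace.single i 1, 0)]
  ring

theorem sum_spaceDeriv_mul_radialDeriv (hw : ContDiff ℝ ∞ w) :
    ∑ i, ∂[i] w q * radialDeriv x₀ (∂[i] w) q =
      ∑ i, (q.1 i - x₀ i) * gradInner w (∂[i] w) q := by
  simp only [radialDeriv, gradInner, Finset.mul_sum]
  rw [Finset.sum_comm]
  refine Finset.sum_congr rfl fun i _ => Finset.sum_congr rfl fun j _ => ?_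
  rw [dirDeriv_comm hw]
  ring

theorem sq_radialDeriv_le (w : SpaceTime n → ℝ) (q : SpaceTime n) :
    radialDeriv x₀ w q ^ 2 ≤ ‖q.1 - x₀‖ ^ 2 * gradInner w w q := by
  simpa [radialDeriv, gradInner, EuclideanSpace.real_norm_sq_eq, ← sq] using
    Finset.sum_mul_sq_le_sq_mul_sq Finset.univ (fun i => q.1 i - x₀ i) (fun i => ∂[i] w q)

theorem spaceDeriv_multiplierFlux (ha : ContDiff ℝ ∞ a) (hw : ContDiff ℝ ∞ w) (i : Fin n) :
    ∂[i] (fun q => -(2 * a q * ∂[i] w q * multiplier x₀ β w q)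
        - a q * (q.1 i - x₀ i) * (∂ₜ w q ^ 2 - gradInner w w q)) q =
      -(2 * multiplier x₀ β w q) * (∂[i] a q * ∂[i] w q)
      - 2 * a q * multiplier x₀ β w q * ∂[i] (∂[i] w) q
      - 2 * a q * (∂[i] w q * ∂[i] w q)
      - 2 * a q * (∂[i] w q * radialDeriv x₀ (∂[i] w) q)
      - 2 * a q * (β * q.2) * (∂[i] w q * ∂[i] (∂ₜ w) q)
      - (∂ₜ w q ^ 2 - gradInner w w q) * ((q.1 i - x₀ i) * ∂[i] a q)
      - a q * (∂ₜ w q ^ 2 - gradInner w w q)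
      - 2 * a q * ∂ₜ w q * ((q.1 i - x₀ i) * ∂[i] (∂ₜ w) q)
      + 2 * a q * ((q.1 i - x₀ i) * gradInner w (∂[i] w) q) := by
  simp (disch := fun_prop) only [dirDeriv_sub, dirDeriv_neg, dirDeriv_mul, dirDeriv_pow,
    dirDeriv_const, dirDeriv_spaceCoord, spaceDeriv_multiplier, dirDeriv_gradInner_self]
  rw [multiplier, multiplier, dirDeriv_comm hw (0, 1)]
  simp
  ring

theorem mul_multiplier_mul_box (ha : ContDiff ℝ ∞ a) (hw : ContDiff ℝ ∞ w) :
    2 * a q * multiplier x₀ β w q * box w q =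
      spacetimeDiv
        (fun q => a q * (β * q.2) * (∂ₜ w q ^ 2 + gradInner w w q)
          + 2 * a q * ∂ₜ w q * radialDeriv x₀ w q)
        (fun i q => -(2 * a q * ∂[i] w q * multiplier x₀ β w q)
          - a q * (q.1 i - x₀ i) * (∂ₜ w q ^ 2 - gradInner w w q)) q
      - β * (q.2 * ∂ₜ a q + a q) * (∂ₜ w q ^ 2 + gradInner w w q)
      - 2 * ∂ₜ a q * ∂ₜ w q * radialDeriv x₀ w q
      + 2 * gradInner a w q * multiplier x₀ β w q + 2 * a q * gradInner w w q
      + (radialDeriv x₀ a q + n * a q) * (∂ₜ w q ^ 2 - gradInner w w q) := by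
  simp only [spacetimeDiv, spaceDeriv_multiplierFlux x₀ β ha hw, Finset.sum_add_distrib,
    Finset.sum_sub_distrib, ← Finset.mul_sum, sum_spaceDeriv_mul_radialDeriv x₀ hw]
  simp (disch := fun_prop) only [dirDeriv_add, dirDeriv_mul, dirDeriv_pow,
    dirDeriv_const, dirDeriv_time, dirDeriv_gradInner_self, timeDeriv_radialDeriv]
  simp only [gradInner, radialDeriv, box, multiplier, Finset.sum_const, Finset.card_univ,
    Fintype.card_fin, nsmul_eq_mul]
  push_cast
  ring

theorem mul_self_mul_multiplier (hf : ContDiff ℝ ∞ f) (hw : ContDiff ℝ ∞ w) :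
    2 * f q * w q * multiplier x₀ β w q =
      spacetimeDiv (fun q => β * q.2 * (f q * w q ^ 2))
        (fun i q => (q.1 i - x₀ i) * (f q * w q ^ 2)) q
      - (multiplier x₀ β f q + (n + β) * f q) * w q ^ 2 := by
  have hspace (i : Fin n) : ∂[i] (fun q => (q.1 i - x₀ i) * (f q * w q ^ 2)) q =
      f q * w q ^ 2 + w q ^ 2 * ((q.1 i - x₀ i) * ∂[i] f q)
        + 2 * f q * w q * ((q.1 i - x₀ i) * ∂[i] w q) := by
    simp (disch := fun_prop) only [dirDeriv_mul, dirDeriv_sub, dirDeriv_pow, dirDeriv_const,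
      dirDeriv_spaceCoord]
    simp
    ring
  simp only [spacetimeDiv, hspace, Finset.sum_add_distrib, ← Finset.mul_sum]
  simp (disch := fun_prop) only [dirDeriv_mul, dirDeriv_pow, dirDeriv_const, dirDeriv_time]
  simp only [radialDeriv, multiplier, Finset.sum_const, Finset.card_univ, Fintype.card_fin,
    nsmul_eq_mul]
  push_cast
  ring

theorem neg_mul_self_mul_box (hg : ContDiff ℝ ∞ g) (hw : ContDiff ℝ ∞ w) :
    -(g q * w q * box w q) =
      spacetimeDiv (fun q => -(g q * w q * ∂ₜ w q) + 1 / 2 * (∂ₜ g q * w q ^ 2))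
        (fun i q => g q * w q * ∂[i] w q - 1 / 2 * (∂[i] g q * w q ^ 2)) q
      + g q * (∂ₜ w q ^ 2 - gradInner w w q) - 1 / 2 * (box g q * w q ^ 2) := by
  have hspace (i : Fin n) :
      ∂[i] (fun q => g q * w q * ∂[i] w q - 1 / 2 * (∂[i] g q * w q ^ 2)) q =
      g q * (∂[i] w q * ∂[i] w q) + g q * w q * ∂[i] (∂[i] w) q
        - 1 / 2 * w q ^ 2 * ∂[i] (∂[i] g) q := by
    simp (disch := fun_prop) only [dirDeriv_mul, dirDeriv_sub, dirDeriv_pow, dirDeriv_const]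
    push_cast
    ring
  simp only [spacetimeDiv, hspace, Finset.sum_add_distrib, Finset.sum_sub_distrib, ← Finset.mul_sum]
  simp (disch := fun_prop) only [dirDeriv_add, dirDeriv_neg, dirDeriv_mul, dirDeriv_pow,
    dirDeriv_const]
  simp only [gradInner, box]
  push_cast
  ring

end Multiplier

section Energy

variable {n : ℕ} {f w : SpaceTime n → ℝ} {q : SpaceTime n}

/-- Energy density `(|∂ₜw|² + |∇w|² + f w²) / 2` of the equation `□w + f w = 0`. -/
noncomputable def energyDensity (f w : SpaceTime n → ℝ) (q : SpaceTime n) : ℝ :=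
  1 / 2 * (∂ₜ w q ^ 2 + gradInner w w q + f q * w q ^ 2)

@[fun_prop]
theorem contDiff_energyDensity (hf : ContDiff ℝ ∞ f) (hw : ContDiff ℝ ∞ w) :
    ContDiff ℝ ∞ (energyDensity f w) := by
  unfold energyDensity; fun_prop

theorem timeDeriv_energyDensity (hf : ContDiff ℝ ∞ f) (hw : ContDiff ℝ ∞ w) :
    ∂ₜ (energyDensity f w) q = ∂ₜ w q * ∂ₜ (∂ₜ w) q + gradInner w (∂ₜ w) q
      + f q * w q * ∂ₜ w q + 1 / 2 * (∂ₜ f q * w q ^ 2) := by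
  unfold energyDensity
  simp (disch := fun_prop) only [dirDeriv_const_mul, dirDeriv_add, dirDeriv_mul, dirDeriv_pow,
    dirDeriv_gradInner_self]
  push_cast
  ring

theorem spacetimeDiv_mul_energyDensity (T : ℝ) (hf : ContDiff ℝ ∞ f) (hw : ContDiff ℝ ∞ w) :
    spacetimeDiv (fun q => (T - q.2) * energyDensity f w q)
        (fun i q => -((T - q.2) * (∂[i] w q * ∂ₜ w q))) q =
      (T - q.2) * ((box w q + f q * w q) * ∂ₜ w q + 1 / 2 * (∂ₜ f q * w q ^ 2))
        - energyDensity f w q := by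
  have hspace (i : Fin n) : ∂[i] (fun q => -((T - q.2) * (∂[i] w q * ∂ₜ w q))) q =
      -((T - q.2) * (∂[i] (∂[i] w) q * ∂ₜ w q + ∂[i] w q * ∂[i] (∂ₜ w) q)) := by
    simp (disch := fun_prop) only [dirDeriv_neg, dirDeriv_mul, dirDeriv_sub, dirDeriv_const,
      dirDeriv_time]
    ring
  simp (disch := fun_prop) only [spacetimeDiv, hspace, dirDeriv_mul, dirDeriv_sub,
    dirDeriv_const, dirDeriv_time, timeDeriv_energyDensity]
  simp only [box, gradInner, dirDeriv_comm hw _ (0, 1), Finset.sum_neg_distrib,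
    ← Finset.mul_sum, Finset.sum_add_distrib, ← Finset.sum_mul]
  ring

end Energy

section Conjugation

variable {n : ℕ} {θ z w : SpaceTime n → ℝ} {q : SpaceTime n}

theorem dirDeriv_exp_mul (hθ : ContDiff ℝ ∞ θ) (hz : ContDiff ℝ ∞ z) (v : SpaceTime n) :
    dirDeriv v (fun q => exp (θ q) * z q) =
      fun q => exp (θ q) * (dirDeriv v z q + dirDeriv v θ q * z q) := by
  ext q
  rw [dirDeriv_mul (by fun_prop) (by fun_prop), dirDeriv_exp (by fun_prop)]
  ring

theorem exp_mul_dirDeriv_dirDeriv (hθ : ContDiff ℝ ∞ θ) (hz : ContDiff ℝ ∞ z)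
    (hw : w = fun q => exp (θ q) * z q) (v : SpaceTime n) :
    exp (θ q) * dirDeriv v (dirDeriv v z) q =
      dirDeriv v (dirDeriv v w) q - 2 * (dirDeriv v θ q * dirDeriv v w q)
        + dirDeriv v θ q * dirDeriv v θ q * w q - dirDeriv v (dirDeriv v θ) q * w q := by
  rw [hw, dirDeriv_exp_mul hθ hz, dirDeriv_exp_mul hθ (by fun_prop)]
  simp (disch := fun_prop) only [dirDeriv_add, dirDeriv_mul]
  ring

theorem exp_mul_box (hθ : ContDiff ℝ ∞ θ) (hz : ContDiff ℝ ∞ z)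
    (hw : w = fun q => exp (θ q) * z q) :
    exp (θ q) * box z q =
      box w q - 2 * (∂ₜ θ q * ∂ₜ w q - gradInner θ w q)
        + (∂ₜ θ q ^ 2 - gradInner θ θ q) * w q - box θ q * w q := by
  simp only [box, gradInner, mul_sub, Finset.mul_sum, exp_mul_dirDeriv_dirDeriv hθ hz hw,
    Finset.sum_add_distrib, Finset.sum_sub_distrib]
  simp only [← Finset.mul_sum, ← Finset.sum_mul]
  ring

end Conjugation

section RadialFunctions

variable {n : ℕ} {f w : SpaceTime n → ℝ} {q : SpaceTime n} {x₀ : EuclideanSpace ℝ (Fin n)} {c : ℝ}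

theorem gradInner_of_radial (hf : ∀ i, ∂[i] f q = c * (q.1 i - x₀ i)) :
    gradInner f w q = c * radialDeriv x₀ w q := by
  simp only [gradInner, radialDeriv, hf, Finset.mul_sum, mul_assoc]

theorem radialDeriv_of_radial (hf : ∀ i, ∂[i] f q = c * (q.1 i - x₀ i)) :
    radialDeriv x₀ f q = c * ‖q.1 - x₀‖ ^ 2 := by
  simp only [radialDeriv, hf, EuclideanSpace.real_norm_sq_eq, Finset.mul_sum]
  exact Finset.sum_congr rfl fun i _ => by simp; ring

@[fun_prop]
theorem contDiff_norm_sub_sq (x₀ : EuclideanSpace ℝ (Fin n)) :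
    ContDiff ℝ ∞ fun q : SpaceTime n => ‖q.1 - x₀‖ ^ 2 :=
  (contDiff_fst.sub contDiff_const).norm_sq ℝ

@[fun_prop]
theorem differentiableAt_norm_sub_sq (x₀ : EuclideanSpace ℝ (Fin n)) :
    DifferentiableAt ℝ (fun q : SpaceTime n => ‖q.1 - x₀‖ ^ 2) q :=
  differentiableAt_of_contDiff (contDiff_norm_sub_sq x₀)

theorem dirDeriv_norm_sub_sq (x₀ : EuclideanSpace ℝ (Fin n)) (v : SpaceTime n) :
    dirDeriv v (fun q => ‖q.1 - x₀‖ ^ 2) q = 2 * ∑ i, (q.1 i - x₀ i) * v.1 i := by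
  simp only [EuclideanSpace.real_norm_sq_eq, PiLp.sub_apply]
  rw [dirDeriv_sum fun i _ => by fun_prop, Finset.mul_sum]
  refine Finset.sum_congr rfl fun i _ => ?_
  rw [dirDeriv_pow (by fun_prop), dirDeriv_sub (by fun_prop) (by fun_prop), dirDeriv_spaceCoord,
    dirDeriv_const]
  push_cast
  ring

end RadialFunctions

section RealInequalities

theorem nonneg_of_abs_le_of_abs_le {y g h u v : ℝ} (hy : 0 ≤ y) (hg : |g| ≤ y ^ 2)
    (hh : |h| ≤ y ^ 3) : 0 ≤ y * v ^ 2 + y ^ 3 * u ^ 2 - g * u * v + 1 / 2 * (h * u ^ 2) := by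
  have hcross : g * u * v ≤ y * (v ^ 2 + (y * u) ^ 2) / 2 :=
    calc g * u * v ≤ |g| * (|u| * |v|) := by
          rw [← abs_mul, ← abs_mul, ← mul_assoc]; exact le_abs_self _
      _ ≤ y ^ 2 * (|u| * |v|) := by gcongr
      _ ≤ y * (v ^ 2 + (y * u) ^ 2) / 2 := by
          have := mul_nonneg hy (sq_nonneg (|v| - y * |u|))
          rw [sub_sq, mul_pow, sq_abs, sq_abs] at this
          linarith
  have hzeroth : -(y ^ 3 * u ^ 2) ≤ h * u ^ 2 := by
    rw [← neg_mul]
    exact mul_le_mul_of_nonneg_right (abs_le.1 hh).1 (sq_nonneg u)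
  linarith [mul_nonneg hy (sq_nonneg v)]

theorem sqrt_mul_le_of_abs_le {s A c : ℝ} (hs : 1 ≤ s) (hc : |c| ≤ A) (y : ℝ) :
    √s * (s ^ 2 * |c| * y ^ 2) ≤ A * (s ^ 3 * y ^ 2) :=
  calc √s * (s ^ 2 * |c| * y ^ 2) ≤ s * (s ^ 2 * A * y ^ 2) := by
        gcongr; exact sqrt_le_self_iff.2 (.inr hs)
    _ = A * (s ^ 3 * y ^ 2) := by ring

theorem le_four_div_mul_of_absorb {s c C D E R X m : ℝ} (hc : 0 < c) (hs : 1 ≤ s) (hm : |m| ≤ s)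
    (hC : 0 ≤ C) (hsC : 4 * (1 + C) ^ 2 ≤ s * c) (hX₀ : 0 ≤ X) (hX : s ^ 3 * X ≤ E)
    (hE : c * E ≤ R) (hR : R ≤ 2 * D + 2 * (m + C * s) ^ 2 * X) : E ≤ 4 / c * D := by
  have hs₀ : 0 < s := one_pos.trans_le hs
  have hsq : (m + C * s) ^ 2 ≤ ((1 + C) * s) ^ 2 := by
    refine sq_le_sq' ?_ ?_ <;> linarith [abs_le.1 hm, mul_nonneg hC hs₀.le]
  have habsorb : 4 * (m + C * s) ^ 2 * X ≤ c * E :=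
    calc 4 * (m + C * s) ^ 2 * X ≤ 4 * ((1 + C) * s) ^ 2 * X := by gcongr
      _ = 4 * (1 + C) ^ 2 * (s ^ 2 * X) := by ring
      _ ≤ s * c * (s ^ 2 * X) := by gcongr
      _ = c * (s ^ 3 * X) := by ring
      _ ≤ c * E := by gcongr
  rw [div_mul_eq_mul_div, le_div_iff₀ hc]
  linarith

theorem eventually_le_mul_atTop (A : ℝ) {c : ℝ} (hc : 0 < c) :
    ∀ᶠ s in Filter.atTop, A ≤ s * c :=
  (Filter.tendsto_id.atTop_mul_const hc).eventually_ge_atTop A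

end RealInequalities

/-- The parameters of the weight `φ = e^{lψ}`, `ψ(x,t) = |x - x₀|² - βt² + C₀`. -/
structure CarlemanWeight (n : ℕ) where
  x₀ : EuclideanSpace ℝ (Fin n)
  β : ℝ
  C₀ : ℝ
  l : ℝ

namespace CarlemanWeight

variable {n : ℕ} (W : CarlemanWeight n) (s : ℝ) {w z : SpaceTime n → ℝ} {q : SpaceTime n}

/-- The weight `φ` as a function on space-time. -/
noncomputable def weight (q : SpaceTime n) : ℝ := phi W.x₀ W.β W.C₀ W.l q.1 q.2

/-- The eikonal expression `β²t² - |x - x₀|² = (|∂ₜψ|² - |∇ψ|²) / 4`. -/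
noncomputable def eikonal (q : SpaceTime n) : ℝ := (W.β * q.2) ^ 2 - ‖q.1 - W.x₀‖ ^ 2

/-- The amplitude `2lφ`, for which `∇φ = 2lφ (x - x₀)` and `∂ₜφ = -2lφ βt`. -/
noncomputable def amplitude (q : SpaceTime n) : ℝ := 2 * W.l * W.weight q

/-- The zeroth order coefficient of the skew part: `□φ` without the summand `-(1 + β) 2lφ`, which
is left to the lower order terms so that the bulk is `(1 - β) 2lφ (|∂ₜw|² + |∇w|²)`. -/
noncomputable def corrector (q : SpaceTime n) : ℝ :=
  W.amplitude q * (2 * W.l * W.eikonal q + 1 - n)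

@[fun_prop]
theorem contDiff_weight : ContDiff ℝ ∞ W.weight := by
  unfold weight phi psi; fun_prop

@[fun_prop]
theorem contDiff_eikonal : ContDiff ℝ ∞ W.eikonal := by unfold eikonal; fun_prop

@[fun_prop]
theorem contDiff_amplitude : ContDiff ℝ ∞ W.amplitude := by unfold amplitude; fun_prop

@[fun_prop]
theorem contDiff_corrector : ContDiff ℝ ∞ W.corrector := by unfold corrector; fun_prop

theorem amplitude_pos (hl : 0 < W.l) (q : SpaceTime n) : 0 < W.amplitude q := by
  unfold amplitude weight phi; positivity

theorem timeDeriv_eikonal : ∂ₜ W.eikonal q = 2 * W.β ^ 2 * q.2 := by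
  unfold eikonal
  simp (disch := fun_prop) only [dirDeriv_sub, dirDeriv_pow, dirDeriv_mul, dirDeriv_const,
    dirDeriv_time, dirDeriv_norm_sub_sq]
  simp
  ring

theorem spaceDeriv_eikonal (i : Fin n) : ∂[i] W.eikonal q = -2 * (q.1 i - W.x₀ i) := by
  unfold eikonal
  simp (disch := fun_prop) only [dirDeriv_sub, dirDeriv_pow, dirDeriv_mul, dirDeriv_const,
    dirDeriv_time, dirDeriv_norm_sub_sq]
  simp

theorem timeDeriv_weight : ∂ₜ W.weight q = -(W.β * q.2 * W.amplitude q) := by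
  unfold amplitude weight phi psi
  simp (disch := fun_prop) only [dirDeriv_exp, dirDeriv_add, dirDeriv_sub, dirDeriv_pow,
    dirDeriv_mul, dirDeriv_const, dirDeriv_time, dirDeriv_norm_sub_sq]
  simp
  ring

theorem spaceDeriv_weight (i : Fin n) : ∂[i] W.weight q = W.amplitude q * (q.1 i - W.x₀ i) := by
  unfold amplitude weight phi psi
  simp (disch := fun_prop) only [dirDeriv_exp, dirDeriv_add, dirDeriv_sub, dirDeriv_pow,
    dirDeriv_mul, dirDeriv_const, dirDeriv_time, dirDeriv_norm_sub_sq]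
  simp
  ring

theorem timeDeriv_amplitude :
    ∂ₜ W.amplitude q = -(2 * W.l * (W.β * q.2) * W.amplitude q) := by
  unfold amplitude
  rw [dirDeriv_mul (by fun_prop) (by fun_prop), dirDeriv_const, W.timeDeriv_weight, amplitude]
  ring

theorem spaceDeriv_amplitude (i : Fin n) :
    ∂[i] W.amplitude q = 2 * W.l * W.amplitude q * (q.1 i - W.x₀ i) := by
  unfold amplitude
  rw [dirDeriv_mul (by fun_prop) (by fun_prop), dirDeriv_const, W.spaceDeriv_weight, amplitude]
  ring

theorem box_weight : box W.weight q = W.corrector q - (1 + W.β) * W.amplitude q := by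
  have htime : ∂ₜ W.weight = fun q => -(W.β * q.2 * W.amplitude q) :=
    funext fun _ => W.timeDeriv_weight
  have hspace (i : Fin n) : ∂[i] W.weight =
      fun q => W.amplitude q * (q.1 i - W.x₀ i) :=
    funext fun _ => W.spaceDeriv_weight i
  simp only [box, htime, hspace]
  simp (disch := fun_prop) only [dirDeriv_neg, dirDeriv_mul, dirDeriv_sub, dirDeriv_const,
    dirDeriv_time, dirDeriv_spaceCoord, timeDeriv_amplitude, spaceDeriv_amplitude,
    Finset.sum_add_distrib, mul_assoc, ← Finset.mul_sum]
  simp [corrector, eikonal, EuclideanSpace.real_norm_sq_eq, ← sq]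
  ring

/-- The formally self-adjoint part of the conjugated wave operator `e^{sφ} □ e^{-sφ}`. -/
noncomputable def symmPart (w : SpaceTime n → ℝ) (q : SpaceTime n) : ℝ :=
  box w q + (s * W.amplitude q) ^ 2 * W.eikonal q * w q

/-- The formally skew-adjoint part of `e^{sφ} □ e^{-sφ}`, up to terms of order zero. -/
noncomputable def skewPart (w : SpaceTime n → ℝ) (q : SpaceTime n) : ℝ :=
  2 * (s * W.amplitude q) * multiplier W.x₀ W.β w q - s * W.corrector q * w q

/-- Time component of the flux in the product `symmPart * skewPart`. -/
noncomputable def timeFlux (w : SpaceTime n → ℝ) (q : SpaceTime n) : ℝ :=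
  s * W.amplitude q * (W.β * q.2) * (∂ₜ w q ^ 2 + gradInner w w q)
    + 2 * (s * W.amplitude q) * ∂ₜ w q * radialDeriv W.x₀ w q
  + W.β * q.2 * ((s * W.amplitude q) ^ 3 * W.eikonal q * w q ^ 2)
  + (-(s * W.corrector q * w q * ∂ₜ w q) + 1 / 2 * (s * ∂ₜ W.corrector q * w q ^ 2))

/-- Space components of the flux in the product `symmPart * skewPart`. -/
noncomputable def spaceFlux (w : SpaceTime n → ℝ) (i : Fin n) (q : SpaceTime n) : ℝ :=
  -(2 * (s * W.amplitude q) * ∂[i] w q * multiplier W.x₀ W.β w q)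
    - s * W.amplitude q * (q.1 i - W.x₀ i) * (∂ₜ w q ^ 2 - gradInner w w q)
  + (q.1 i - W.x₀ i) * ((s * W.amplitude q) ^ 3 * W.eikonal q * w q ^ 2)
  + (s * W.corrector q * w q * ∂[i] w q - 1 / 2 * (s * ∂[i] W.corrector q * w q ^ 2))

/-- What is left of the product `symmPart * skewPart` after removing the divergence. -/
noncomputable def bulk (w : SpaceTime n → ℝ) (q : SpaceTime n) : ℝ :=
  s * W.amplitude q * (1 - W.β) * (∂ₜ w q ^ 2 + gradInner w w q)
    + 4 * W.l * (s * W.amplitude q) * multiplier W.x₀ W.β w q ^ 2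
    + (s * W.amplitude q) ^ 3 * w q ^ 2 * (4 * W.l * W.eikonal q ^ 2
      - (1 + 3 * W.β) * W.eikonal q + 2 * (1 - W.β) * ‖q.1 - W.x₀‖ ^ 2)
    - 1 / 2 * (s * box W.corrector q * w q ^ 2)

theorem exp_mul_box_eq (hz : ContDiff ℝ ∞ z) (hw : w = fun q => exp (s * W.weight q) * z q) :
    exp (s * W.weight q) * box z q =
      W.symmPart s w q + W.skewPart s w q + (1 + W.β) * (s * W.amplitude q) * w q := by
  have hspace (i : Fin n) :
      ∂[i] (fun q => s * W.weight q) q = s * W.amplitude q * (q.1 i - W.x₀ i) := by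
    rw [dirDeriv_const_mul (by fun_prop), W.spaceDeriv_weight, mul_assoc]
  rw [exp_mul_box (θ := fun q => s * W.weight q) (by fun_prop) hz hw, gradInner_of_radial hspace,
    gradInner_of_radial hspace, radialDeriv_of_radial hspace, box_const_mul (by fun_prop),
    dirDeriv_const_mul (by fun_prop), W.timeDeriv_weight, W.box_weight]
  simp only [symmPart, skewPart, multiplier, eikonal]
  ring

theorem multiplier_amplitude_cube_mul_eikonal :
    multiplier W.x₀ W.β (fun q => (s * W.amplitude q) ^ 3 * W.eikonal q) q =
      (s * W.amplitude q) ^ 3 * (2 * W.β * W.eikonal q - 6 * W.l * W.eikonal q ^ 2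
        - 2 * (1 - W.β) * ‖q.1 - W.x₀‖ ^ 2) := by
  have hspace (i : Fin n) : ∂[i] (fun q => (s * W.amplitude q) ^ 3 * W.eikonal q) q =
      (s * W.amplitude q) ^ 3 * (6 * W.l * W.eikonal q - 2) * (q.1 i - W.x₀ i) := by
    simp (disch := fun_prop) only [dirDeriv_mul, dirDeriv_pow, dirDeriv_const,
      spaceDeriv_amplitude, spaceDeriv_eikonal]
    push_cast
    ring
  rw [multiplier, radialDeriv_of_radial hspace]
  simp (disch := fun_prop) only [dirDeriv_mul, dirDeriv_pow, dirDeriv_const,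
    timeDeriv_amplitude, timeDeriv_eikonal]
  rw [eikonal]
  push_cast
  ring

theorem symmPart_mul_skewPart (hw : ContDiff ℝ ∞ w) :
    W.symmPart s w q * W.skewPart s w q =
      spacetimeDiv (W.timeFlux s w) (W.spaceFlux s w) q + W.bulk s w q := by
  have hspace (i : Fin n) : ∂[i] (fun q => s * W.amplitude q) q =
      2 * W.l * (s * W.amplitude q) * (q.1 i - W.x₀ i) := by
    rw [dirDeriv_const_mul (by fun_prop), W.spaceDeriv_amplitude]
    ring
  have hsecond := mul_multiplier_mul_box W.x₀ W.β (a := fun q => s * W.amplitude q) (q := q)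
    (by fun_prop) hw
  have hzeroth := mul_self_mul_multiplier W.x₀ W.β (q := q)
    (f := fun q => (s * W.amplitude q) ^ 3 * W.eikonal q) (by fun_prop) hw
  have hcorrector := neg_mul_self_mul_box (g := fun q => s * W.corrector q) (q := q)
    (by fun_prop) hw
  rw [gradInner_of_radial hspace, radialDeriv_of_radial hspace, dirDeriv_const_mul (by fun_prop),
    W.timeDeriv_amplitude] at hsecond
  rw [multiplier_amplitude_cube_mul_eikonal] at hzeroth
  simp (disch := fun_prop) only [dirDeriv_const_mul, box_const_mul] at hcorrector
  unfold timeFlux spaceFlux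
  rw [spacetimeDiv_add (by fun_prop) (by fun_prop) (by fun_prop) (by fun_prop),
    spacetimeDiv_add (by fun_prop) (by fun_prop) (by fun_prop) (by fun_prop)]
  simp only [symmPart, skewPart, bulk]
  simp only [corrector, eikonal, multiplier] at hsecond hzeroth hcorrector ⊢
  linear_combination hsecond + hzeroth + hcorrector

/-- Geometric assumptions on the weight over `Ω × (0, T)`: the centre `x₀` is at distance at least
`δ` from `Ω`, waves from the centre leave `Ω` before time `T`, and `l` is large enough for the bulk
to be coercive. -/
structure Admissible (Ω : Set (EuclideanSpace ℝ (Fin n))) (T δ ρ : ℝ) : Prop where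
  beta_mem : W.β ∈ Ioo 0 1
  delta_pos : 0 < δ
  rho_pos : 0 < ρ
  rho_lt : ρ < W.β * T
  delta_le_norm : ∀ x ∈ Ω, δ ≤ ‖x - W.x₀‖
  norm_le_rho : ∀ x ∈ Ω, ‖x - W.x₀‖ ≤ ρ
  one_le_l_mul : 1 ≤ W.l * ((1 - W.β) * δ ^ 2)

/-- The potential `(2lφ)² (β²t² - |x - x₀|²)`, to be multiplied by `s²` in `symmPart`. -/
noncomputable def potential (q : SpaceTime n) : ℝ := W.amplitude q ^ 2 * W.eikonal q

@[fun_prop]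
theorem contDiff_potential : ContDiff ℝ ∞ W.potential := by unfold potential; fun_prop

/-- Uniform bounds `a₀`, `A` on `S` for all coefficients of the conjugated operator. -/
structure BoundedOn (S : Set (SpaceTime n)) (a₀ A : ℝ) : Prop where
  lower_pos : 0 < a₀
  upper_nonneg : 0 ≤ A
  le_amplitude : ∀ q ∈ S, a₀ ≤ W.amplitude q
  amplitude_le : ∀ q ∈ S, W.amplitude q ≤ A
  abs_corrector_le : ∀ q ∈ S, |W.corrector q| ≤ A
  abs_timeDeriv_corrector_le : ∀ q ∈ S, |∂ₜ W.corrector q| ≤ A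
  abs_box_corrector_le : ∀ q ∈ S, |box W.corrector q| ≤ A
  abs_potential_le : ∀ q ∈ S, |W.potential q| ≤ A
  abs_timeDeriv_potential_le : ∀ q ∈ S, |∂ₜ W.potential q| ≤ A

variable {W} {Ω : Set (EuclideanSpace ℝ (Fin n))} {S : Set (SpaceTime n)} {T δ ρ a₀ A s : ℝ}

theorem Admissible.l_pos (hW : W.Admissible Ω T δ ρ) : 0 < W.l := by
  have hδ : 0 < (1 - W.β) * δ ^ 2 :=
    mul_pos (sub_pos.2 hW.beta_mem.2) (pow_pos hW.delta_pos 2)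
  exact pos_of_mul_pos_left (one_pos.trans_le hW.one_le_l_mul) hδ.le

theorem exists_boundedOn (hl : 0 < W.l) (hS : Bornology.IsBounded S) :
    ∃ a₀ A, W.BoundedOn S a₀ A := by
  have hcompact : IsCompact (closure S) := hS.isCompact_closure
  obtain ⟨a₀, ha₀, hlower⟩ := hcompact.exists_forall_le' (a := 0)
    W.contDiff_amplitude.continuous.continuousOn fun q _ => W.amplitude_pos hl q
  let total (q : SpaceTime n) : ℝ := |W.amplitude q| + |W.corrector q| + |∂ₜ W.corrector q|
    + |box W.corrector q| + |W.potential q| + |∂ₜ W.potential q|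
  have hcont : Continuous total := by unfold total; fun_prop
  obtain ⟨A, hupper⟩ := hcompact.exists_bound_of_continuousOn hcont.continuousOn
  have hbound {q : SpaceTime n} (hq : q ∈ S) : total q ≤ |A| :=
    (le_abs_self _).trans ((hupper q (subset_closure hq)).trans (le_abs_self A))
  refine ⟨a₀, |A|, ha₀, abs_nonneg A, fun q hq => hlower q (subset_closure hq),
    fun q hq => (le_abs_self _).trans (le_trans ?_ (hbound hq)),
    fun q hq => le_trans ?_ (hbound hq), fun q hq => le_trans ?_ (hbound hq),
    fun q hq => le_trans ?_ (hbound hq), fun q hq => le_trans ?_ (hbound hq),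
    fun q hq => le_trans ?_ (hbound hq)⟩ <;>
  · unfold total
    linarith [abs_nonneg (W.amplitude q), abs_nonneg (W.corrector q),
      abs_nonneg (∂ₜ W.corrector q), abs_nonneg (box W.corrector q),
      abs_nonneg (W.potential q), abs_nonneg (∂ₜ W.potential q)]

theorem BoundedOn.mono (hb : W.BoundedOn S a₀ A) {S' : Set (SpaceTime n)} (hS : S' ⊆ S) :
    W.BoundedOn S' a₀ A where
  lower_pos := hb.lower_pos
  upper_nonneg := hb.upper_nonneg
  le_amplitude q hq := hb.le_amplitude q (hS hq)
  amplitude_le q hq := hb.amplitude_le q (hS hq)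
  abs_corrector_le q hq := hb.abs_corrector_le q (hS hq)
  abs_timeDeriv_corrector_le q hq := hb.abs_timeDeriv_corrector_le q (hS hq)
  abs_box_corrector_le q hq := hb.abs_box_corrector_le q (hS hq)
  abs_potential_le q hq := hb.abs_potential_le q (hS hq)
  abs_timeDeriv_potential_le q hq := hb.abs_timeDeriv_potential_le q (hS hq)

theorem Admissible.le_zerothOrder_bulk (hW : W.Admissible Ω T δ ρ) (hq : q.1 ∈ Ω) :
    (1 - W.β) * δ ^ 2 ≤ 4 * W.l * W.eikonal q ^ 2 - (1 + 3 * W.β) * W.eikonal q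
      + 2 * (1 - W.β) * ‖q.1 - W.x₀‖ ^ 2 := by
  obtain ⟨hβ₀, hβ₁⟩ := hW.beta_mem
  have hnorm : (1 - W.β) * δ ^ 2 ≤ (1 - W.β) * ‖q.1 - W.x₀‖ ^ 2 :=
    mul_le_mul_of_nonneg_left (pow_le_pow_left₀ hW.delta_pos.le (hW.delta_le_norm _ hq) 2)
      (sub_nonneg.2 hβ₁.le)
  have hdiscr : 0 ≤ W.l * (4 * W.l * W.eikonal q ^ 2 - (1 + 3 * W.β) * W.eikonal q
      + (1 - W.β) * δ ^ 2) := by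
    have hβ : (1 + 3 * W.β) ^ 2 ≤ 4 ^ 2 := pow_le_pow_left₀ (by linarith) (by linarith) 2
    linarith [sq_nonneg (2 * W.l * W.eikonal q - (1 + 3 * W.β) / 4), hW.one_le_l_mul]
  linarith [nonneg_of_mul_nonneg_right hdiscr hW.l_pos]

/-- The density `s (|∂ₜw|² + |∇w|²) + s³ w²` controlled by Carleman estimates. -/
noncomputable def density (s : ℝ) (w : SpaceTime n → ℝ) (q : SpaceTime n) : ℝ :=
  s * (∂ₜ w q ^ 2 + gradInner w w q) + s ^ 3 * w q ^ 2

@[fun_prop]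
theorem contDiff_density (s : ℝ) (hw : ContDiff ℝ ∞ w) : ContDiff ℝ ∞ (density s w) := by
  unfold density; fun_prop

theorem density_nonneg (hs : 0 ≤ s) (w : SpaceTime n → ℝ) (q : SpaceTime n) :
    0 ≤ density s w q :=
  add_nonneg (mul_nonneg hs (add_nonneg (sq_nonneg _) (gradInner_self_nonneg w q)))
    (mul_nonneg (pow_nonneg hs 3) (sq_nonneg _))

theorem Admissible.mul_sq_le_zerothOrder_bulk (hW : W.Admissible Ω T δ ρ)
    (hb : W.BoundedOn S a₀ A) (hs : 1 ≤ s) (hsA : A ≤ s * (a₀ ^ 3 * ((1 - W.β) * δ ^ 2)))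
    (hqS : q ∈ S) (hq : q.1 ∈ Ω) (y : ℝ) :
    a₀ ^ 3 * ((1 - W.β) * δ ^ 2) / 2 * (s ^ 3 * y ^ 2) ≤
      (s * W.amplitude q) ^ 3 * y ^ 2 * (4 * W.l * W.eikonal q ^ 2
        - (1 + 3 * W.β) * W.eikonal q + 2 * (1 - W.β) * ‖q.1 - W.x₀‖ ^ 2)
      - 1 / 2 * (s * box W.corrector q * y ^ 2) := by
  set b := (1 - W.β) * δ ^ 2
  have hb₀ : 0 < b := mul_pos (sub_pos.2 hW.beta_mem.2) (pow_pos hW.delta_pos 2)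
  have ha₀ : 0 < a₀ := hb.lower_pos
  have hs₀ : 0 < s := one_pos.trans_le hs
  have hcube : (s * a₀) ^ 3 ≤ (s * W.amplitude q) ^ 3 :=
    pow_le_pow_left₀ (by positivity)
      (mul_le_mul_of_nonneg_left (hb.le_amplitude q hqS) hs₀.le) 3
  have hzeroth := mul_le_mul (mul_le_mul_of_nonneg_right hcube (sq_nonneg y))
    (hW.le_zerothOrder_bulk hq) hb₀.le
    (mul_nonneg ((by positivity : 0 ≤ (s * a₀) ^ 3).trans hcube) (sq_nonneg y))
  have hcorrector : s * box W.corrector q * y ^ 2 ≤ (s * a₀) ^ 3 * y ^ 2 * b := by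
    calc s * box W.corrector q * y ^ 2 ≤ s * (s * (s * (a₀ ^ 3 * b))) * y ^ 2 := by
          gcongr
          refine (le_abs_self _).trans ((hb.abs_box_corrector_le q hqS).trans (hsA.trans ?_))
          exact le_mul_of_one_le_left (by positivity) hs
      _ = (s * a₀) ^ 3 * y ^ 2 * b := by ring
  linarith

theorem Admissible.mul_density_le_bulk (hW : W.Admissible Ω T δ ρ) (hb : W.BoundedOn S a₀ A)
    (hs : 1 ≤ s) (hsA : A ≤ s * (a₀ ^ 3 * ((1 - W.β) * δ ^ 2))) (w : SpaceTime n → ℝ)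
    (hqS : q ∈ S) (hq : q.1 ∈ Ω) :
    min (a₀ * (1 - W.β)) (a₀ ^ 3 * ((1 - W.β) * δ ^ 2) / 2) * density s w q ≤ W.bulk s w q := by
  have hβ : 0 < 1 - W.β := sub_pos.2 hW.beta_mem.2
  have hs₀ : 0 < s := one_pos.trans_le hs
  have hl : 0 < W.l := hW.l_pos
  have hα : 0 < W.amplitude q := W.amplitude_pos hl q
  have hG : 0 ≤ ∂ₜ w q ^ 2 + gradInner w w q :=
    add_nonneg (sq_nonneg _) (gradInner_self_nonneg w q)
  have hfirst : a₀ * (1 - W.β) * (s * (∂ₜ w q ^ 2 + gradInner w w q)) ≤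
      W.amplitude q * (1 - W.β) * (s * (∂ₜ w q ^ 2 + gradInner w w q)) := by
    gcongr
    exact hb.le_amplitude q hqS
  have hmultiplier : 0 ≤ 4 * W.l * (s * W.amplitude q) * multiplier W.x₀ W.β w q ^ 2 := by
    positivity
  have hzeroth := hW.mul_sq_le_zerothOrder_bulk hb hs hsA hqS hq (w q)
  have hmin₁ := mul_le_mul_of_nonneg_right
    (min_le_left (a₀ * (1 - W.β)) (a₀ ^ 3 * ((1 - W.β) * δ ^ 2) / 2)) (mul_nonneg hs₀.le hG)
  have hmin₂ := mul_le_mul_of_nonneg_right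
    (min_le_right (a₀ * (1 - W.β)) (a₀ ^ 3 * ((1 - W.β) * δ ^ 2) / 2))
    (mul_nonneg (pow_nonneg hs₀.le 3) (sq_nonneg (w q)))
  simp only [density, bulk]
  linarith

theorem Admissible.mul_sq_le_flux_of_finalTime (hW : W.Admissible Ω T δ ρ)
    {x : EuclideanSpace ℝ (Fin n)} (hx : x ∈ Ω) (w : SpaceTime n → ℝ) :
    (W.β * T - ρ) * ∂ₜ w (x, T) ^ 2 ≤
      W.β * T * (∂ₜ w (x, T) ^ 2 + gradInner w w (x, T))
        + 2 * ∂ₜ w (x, T) * radialDeriv W.x₀ w (x, T) := by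
  have hG := gradInner_self_nonneg w (x, T)
  have hradial : radialDeriv W.x₀ w (x, T) ^ 2 ≤ ρ ^ 2 * gradInner w w (x, T) :=
    (sq_radialDeriv_le W.x₀ w (x, T)).trans (mul_le_mul_of_nonneg_right
      (pow_le_pow_left₀ (norm_nonneg _) (hW.norm_le_rho x hx) 2) hG)
  have hsquare : 0 ≤ ρ * (ρ * (∂ₜ w (x, T) ^ 2 + gradInner w w (x, T))
      + 2 * ∂ₜ w (x, T) * radialDeriv W.x₀ w (x, T)) := by
    linarith [sq_nonneg (ρ * ∂ₜ w (x, T) + radialDeriv W.x₀ w (x, T))]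
  linarith [nonneg_of_mul_nonneg_right hsquare hW.rho_pos,
    mul_nonneg (sub_nonneg.2 hW.rho_lt.le) hG]

theorem Admissible.pow_three_le_mul_eikonal (hW : W.Admissible Ω T δ ρ)
    {x : EuclideanSpace ℝ (Fin n)} (hx : x ∈ Ω) :
    (W.β * T - ρ) ^ 3 ≤ W.β * T * W.eikonal (x, T) := by
  have hκ : 0 ≤ W.β * T - ρ := sub_nonneg.2 hW.rho_lt.le
  have hρ := hW.rho_pos
  have heikonal : (W.β * T - ρ) ^ 2 ≤ W.eikonal (x, T) := by
    have := pow_le_pow_left₀ (norm_nonneg _) (hW.norm_le_rho x hx) 2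
    simp only [eikonal]
    linarith [mul_nonneg hρ.le hκ]
  calc (W.β * T - ρ) ^ 3 = (W.β * T - ρ) * (W.β * T - ρ) ^ 2 := by ring
    _ ≤ W.β * T * W.eikonal (x, T) := by gcongr <;> linarith

theorem Admissible.timeFlux_finalTime_nonneg (hW : W.Admissible Ω T δ ρ)
    (hb : W.BoundedOn S a₀ A) (hs : 1 ≤ s) (hsq : A ≤ s * (a₀ * (W.β * T - ρ)) ^ 2)
    (hcube : A ≤ s * (a₀ * (W.β * T - ρ)) ^ 3) (w : SpaceTime n → ℝ)
    {x : EuclideanSpace ℝ (Fin n)} (hx : x ∈ Ω) (hxS : (x, T) ∈ S) :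
    0 ≤ W.timeFlux s w (x, T) := by
  have hs₀ : 0 < s := one_pos.trans_le hs
  have hκ : 0 < W.β * T - ρ := sub_pos.2 hW.rho_lt
  have ha₀ := hb.lower_pos
  have hα : a₀ ≤ W.amplitude (x, T) := hb.le_amplitude _ hxS
  have hα₀ : 0 < W.amplitude (x, T) := ha₀.trans_le hα
  set y := s * W.amplitude (x, T) * (W.β * T - ρ) with hy
  have hle : s * (a₀ * (W.β * T - ρ)) ≤ y := by rw [hy, mul_assoc]; gcongr
  have hcorrector : |s * W.corrector (x, T)| ≤ y ^ 2 := by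
    rw [abs_mul, abs_of_pos hs₀]
    calc s * |W.corrector (x, T)| ≤ s * (s * (a₀ * (W.β * T - ρ)) ^ 2) := by
          gcongr; exact (hb.abs_corrector_le _ hxS).trans hsq
      _ = (s * (a₀ * (W.β * T - ρ))) ^ 2 := by ring
      _ ≤ y ^ 2 := by gcongr
  have htimeDeriv : |s * ∂ₜ W.corrector (x, T)| ≤ y ^ 3 := by
    rw [abs_mul, abs_of_pos hs₀]
    calc s * |∂ₜ W.corrector (x, T)| ≤ s * (s * (s * (a₀ * (W.β * T - ρ)) ^ 3)) := by
          gcongr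
          exact ((hb.abs_timeDeriv_corrector_le _ hxS).trans hcube).trans
            (le_mul_of_one_le_left (by positivity) hs)
      _ = (s * (a₀ * (W.β * T - ρ))) ^ 3 := by ring
      _ ≤ y ^ 3 := by gcongr
  have hsum := nonneg_of_abs_le_of_abs_le (u := w (x, T)) (v := ∂ₜ w (x, T))
    (by positivity) hcorrector htimeDeriv
  have hfirst := mul_le_mul_of_nonneg_left (hW.mul_sq_le_flux_of_finalTime hx w)
    (mul_pos hs₀ hα₀).le
  have hzeroth := mul_le_mul_of_nonneg_left (hW.pow_three_le_mul_eikonal hx)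
    (mul_nonneg (pow_nonneg (mul_pos hs₀ hα₀).le 3) (sq_nonneg (w (x, T))))
  simp only [timeFlux]
  rw [hy] at hsum
  linarith

@[fun_prop]
theorem contDiff_symmPart (hw : ContDiff ℝ ∞ w) : ContDiff ℝ ∞ (W.symmPart s w) := by
  unfold symmPart; fun_prop

@[fun_prop]
theorem contDiff_skewPart (hw : ContDiff ℝ ∞ w) : ContDiff ℝ ∞ (W.skewPart s w) := by
  unfold skewPart; fun_prop

@[fun_prop]
theorem contDiff_timeFlux (hw : ContDiff ℝ ∞ w) : ContDiff ℝ ∞ (W.timeFlux s w) := by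
  unfold timeFlux; fun_prop

@[fun_prop]
theorem contDiff_spaceFlux (hw : ContDiff ℝ ∞ w) (i : Fin n) :
    ContDiff ℝ ∞ (W.spaceFlux s w i) := by
  unfold spaceFlux; fun_prop

theorem supportedOver_spaceFlux {K : Set (EuclideanSpace ℝ (Fin n))} (hK : IsClosed K)
    (hw : SupportedOver K w) (i : Fin n) : SupportedOver K (W.spaceFlux s w i) := fun q hq => by
  simp [spaceFlux, gradInner, hw q hq, hw.dirDeriv hK _ q hq]

/-- Smooth functions vanishing at time `0` and outside a cylinder over a compact subset of `Ω`. -/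
structure IsTestFunction (Ω : Set (EuclideanSpace ℝ (Fin n))) (w : SpaceTime n → ℝ) : Prop where
  contDiff : ContDiff ℝ ∞ w
  exists_supportedOver : ∃ K ⊆ Ω, IsCompact K ∧ SupportedOver K w
  initial_eq_zero : ∀ x, w (x, 0) = 0

theorem IsTestFunction.mul_left (hw : IsTestFunction Ω w) {u : SpaceTime n → ℝ}
    (hu : ContDiff ℝ ∞ u) : IsTestFunction Ω fun q => u q * w q :=
  ⟨hu.mul hw.contDiff,
    let ⟨K, hKΩ, hK, hwK⟩ := hw.exists_supportedOver
    ⟨K, hKΩ, hK, hwK.mul_left u⟩,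
    fun x => by simp [hw.initial_eq_zero x]⟩

theorem IsTestFunction.initial_spaceDeriv (hw : IsTestFunction Ω w)
    (x : EuclideanSpace ℝ (Fin n)) (i : Fin n) : ∂[i] w (x, 0) = 0 := by
  simp [← fderiv_spaceSlice hw.contDiff, hw.initial_eq_zero]

theorem BoundedOn.sqrt_mul_energyDensity_le (hb : W.BoundedOn S a₀ A) (hs : 1 ≤ s)
    (w : SpaceTime n → ℝ) (hq : q ∈ S) :
    √s * energyDensity (fun q => s ^ 2 * W.potential q) w q ≤ (1 + A) * density s w q := by
  have hG : 0 ≤ ∂ₜ w q ^ 2 + gradInner w w q :=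
    add_nonneg (sq_nonneg _) (gradInner_self_nonneg w q)
  have hfirst := mul_le_mul_of_nonneg_right (sqrt_le_self_iff.2 (.inr hs)) hG
  have hzeroth := sqrt_mul_le_of_abs_le hs (hb.abs_potential_le q hq) (w q)
  have habs : √s * (s ^ 2 * W.potential q * w q ^ 2) ≤
      √s * (s ^ 2 * |W.potential q| * w q ^ 2) := by
    gcongr; exact le_abs_self _
  have hA := hb.upper_nonneg
  have hdensity := mul_nonneg hA (mul_nonneg (zero_le_one.trans hs) hG)
  have hcube : 0 ≤ A * (s ^ 3 * w q ^ 2) := by positivity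
  have hcube' : 0 ≤ s ^ 3 * w q ^ 2 := by positivity
  simp only [energyDensity, density]
  linarith [mul_nonneg (zero_le_one.trans hs) hG]

theorem BoundedOn.neg_sqrt_mul_power_le (hb : W.BoundedOn S a₀ A) (hs : 1 ≤ s)
    (w : SpaceTime n → ℝ) (hq : q ∈ S) (P : ℝ) :
    -(√s * (P * ∂ₜ w q + 1 / 2 * (s ^ 2 * ∂ₜ W.potential q * w q ^ 2))) ≤
      (1 + A) * (P ^ 2 + density s w q) := by
  have hs₀ : 0 ≤ s := zero_le_one.trans hs
  have hA := hb.upper_nonneg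
  have hcross : -(√s * (P * ∂ₜ w q)) ≤ 1 / 2 * (P ^ 2 + s * ∂ₜ w q ^ 2) := by
    have := sq_nonneg (P + √s * ∂ₜ w q)
    rw [add_sq, mul_pow, sq_sqrt hs₀] at this
    linarith
  have hzeroth := sqrt_mul_le_of_abs_le hs (hb.abs_timeDeriv_potential_le q hq) (w q)
  have habs : -(√s * (s ^ 2 * ∂ₜ W.potential q * w q ^ 2)) ≤
      √s * (s ^ 2 * |∂ₜ W.potential q| * w q ^ 2) := by
    rw [← mul_neg, ← neg_mul, ← mul_neg]
    gcongr
    exact neg_le_abs _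
  have hfirst := mul_nonneg hs₀
    (add_nonneg (sq_nonneg (∂ₜ w q)) (gradInner_self_nonneg w q))
  have hscaled := mul_nonneg hA (add_nonneg (sq_nonneg P) hfirst)
  have hcube : 0 ≤ s ^ 3 * w q ^ 2 := by positivity
  have hcube' := mul_nonneg hA hcube
  have hgrad := mul_nonneg hs₀ (gradInner_self_nonneg w q)
  simp only [density]
  linarith [sq_nonneg P]

theorem BoundedOn.sqrt_mul_energyDensity_sub_power_le (hb : W.BoundedOn S a₀ A) (hs : 1 ≤ s)
    (w : SpaceTime n → ℝ) (hq : q ∈ S) (hT : q.2 ∈ Icc 0 T) (P : ℝ) :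
    √s * (energyDensity (fun q => s ^ 2 * W.potential q) w q
        - (T - q.2) * (P * ∂ₜ w q + 1 / 2 * (s ^ 2 * ∂ₜ W.potential q * w q ^ 2))) ≤
      (1 + T) * (1 + A) * (P ^ 2 + density s w q) := by
  have hX : 0 ≤ (1 + A) * (P ^ 2 + density s w q) :=
    mul_nonneg (add_nonneg zero_le_one hb.upper_nonneg)
      (add_nonneg (sq_nonneg P) (density_nonneg (zero_le_one.trans hs) w q))
  have henergy := hb.sqrt_mul_energyDensity_le hs w hq
  have hpower := (mul_le_mul_of_nonneg_left (hb.neg_sqrt_mul_power_le hs w hq P)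
    (sub_nonneg.2 hT.2)).trans (mul_le_mul_of_nonneg_right (sub_le_self T hT.1) hX)
  linarith [mul_nonneg (add_nonneg zero_le_one hb.upper_nonneg) (sq_nonneg P)]

theorem BoundedOn.sqrt_mul_integral_velocity_le (hb : W.BoundedOn (Ω ×ˢ Icc 0 T) a₀ A)
    (hΩ : MeasurableSet Ω) (hΩb : Bornology.IsBounded Ω) (hT : 0 ≤ T) (hs : 1 ≤ s)
    (hw : IsTestFunction Ω w) :
    √s * (T / 2 * ∫ x in Ω, ∂ₜ w (x, 0) ^ 2) ≤ (1 + T) * (1 + A) *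
      ∫ q in Ω ×ˢ Ioo 0 T, (W.symmPart s w q ^ 2 + density s w q) := by
  have hsmooth := hw.contDiff
  obtain ⟨K, hKΩ, hK, hwK⟩ := hw.exists_supportedOver
  let N (q : SpaceTime n) : ℝ := (T - q.2) * energyDensity (fun q => s ^ 2 * W.potential q) w q
  let V (i : Fin n) (q : SpaceTime n) : ℝ := -((T - q.2) * (∂[i] w q * ∂ₜ w q))
  have hV (i : Fin n) : SupportedOver K (V i) := fun q hq => by
    simp [V, hwK.dirDeriv hK.isClosed _ q hq]
  have hQ : Bornology.IsBounded (Ω ×ˢ Ioo 0 T) := hΩb.prod (Metric.isBounded_Ioo 0 T)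
  have hdiv (q : SpaceTime n) : spacetimeDiv N V q = (T - q.2) * (W.symmPart s w q * ∂ₜ w q
      + 1 / 2 * (s ^ 2 * ∂ₜ W.potential q * w q ^ 2))
      - energyDensity (fun q => s ^ 2 * W.potential q) w q := by
    rw [spacetimeDiv_mul_energyDensity T (by fun_prop) hsmooth, dirDeriv_const_mul (by fun_prop)]
    simp only [symmPart, potential]
    ring
  have hinitial : T / 2 * ∫ x in Ω, ∂ₜ w (x, 0) ^ 2 =
      -∫ q in Ω ×ˢ Ioo 0 T, spacetimeDiv N V q := by
    rw [setIntegral_spacetimeDiv (by fun_prop) (by fun_prop) hK hV hKΩ hΩb hT]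
    simp only [N, energyDensity, gradInner, hw.initial_eq_zero, hw.initial_spaceDeriv]
    simp [mul_assoc, integral_const_mul, div_eq_mul_inv]
  rw [hinitial, ← integral_neg, ← integral_const_mul, ← integral_const_mul]
  simp only [hdiv, neg_sub]
  exact setIntegral_mono_on (integrableOn_of_continuous (by fun_prop) hQ)
    (integrableOn_of_continuous (by fun_prop) hQ) (hΩ.prod measurableSet_Ioo)
    fun q hq => hb.sqrt_mul_energyDensity_sub_power_le hs w
      ⟨hq.1, Ioo_subset_Icc_self hq.2⟩ (Ioo_subset_Icc_self hq.2) _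

theorem Admissible.le_sq_symmPart_add_skewPart (hW : W.Admissible Ω T δ ρ)
    (hb : W.BoundedOn S a₀ A) (hs : 1 ≤ s)
    (hsA : A ≤ s * (a₀ ^ 3 * ((1 - W.β) * δ ^ 2))) (hw : ContDiff ℝ ∞ w) (hqS : q ∈ S)
    (hq : q.1 ∈ Ω) {c : ℝ} (hc₁ : c ≤ 1)
    (hc : c ≤ min (a₀ * (1 - W.β)) (a₀ ^ 3 * ((1 - W.β) * δ ^ 2) / 2)) :
    c * (W.symmPart s w q ^ 2 + density s w q)
        + 2 * spacetimeDiv (W.timeFlux s w) (W.spaceFlux s w) q ≤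
      (W.symmPart s w q + W.skewPart s w q) ^ 2 := by
  have hdensity := density_nonneg (zero_le_one.trans hs) w q
  have hmin : 0 ≤ min (a₀ * (1 - W.β)) (a₀ ^ 3 * ((1 - W.β) * δ ^ 2) / 2) := by
    have := sub_pos.2 hW.beta_mem.2
    have := hb.lower_pos
    positivity
  have hbulk := hW.mul_density_le_bulk hb hs hsA w hqS hq
  linarith [mul_le_mul_of_nonneg_right hc hdensity, mul_nonneg hmin hdensity,
    mul_le_of_le_one_left (sq_nonneg (W.symmPart s w q)) hc₁, sq_nonneg (W.skewPart s w q),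
    W.symmPart_mul_skewPart s hw (q := q)]

theorem Admissible.setIntegral_spacetimeDiv_flux_nonneg (hW : W.Admissible Ω T δ ρ)
    (hΩ : MeasurableSet Ω) (hΩb : Bornology.IsBounded Ω) (hT : 0 ≤ T)
    (hb : W.BoundedOn (Ω ×ˢ Icc 0 T) a₀ A) (hs : 1 ≤ s)
    (hsq : A ≤ s * (a₀ * (W.β * T - ρ)) ^ 2) (hcube : A ≤ s * (a₀ * (W.β * T - ρ)) ^ 3)
    (hw : IsTestFunction Ω w) :
    0 ≤ ∫ q in Ω ×ˢ Ioo 0 T, spacetimeDiv (W.timeFlux s w) (W.spaceFlux s w) q := by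
  obtain ⟨K, hKΩ, hK, hwK⟩ := hw.exists_supportedOver
  have hinitial (x : EuclideanSpace ℝ (Fin n)) : W.timeFlux s w (x, 0) = 0 := by
    simp [timeFlux, radialDeriv, hw.initial_eq_zero, hw.initial_spaceDeriv]
  rw [setIntegral_spacetimeDiv (contDiff_timeFlux hw.contDiff) (contDiff_spaceFlux hw.contDiff)
    hK (supportedOver_spaceFlux hK.isClosed hwK) hKΩ hΩb hT]
  simp only [hinitial, integral_zero, sub_zero]
  exact setIntegral_nonneg hΩ fun x hx =>
    hW.timeFlux_finalTime_nonneg hb hs hsq hcube w hx ⟨hx, right_mem_Icc.2 hT⟩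

theorem Admissible.mul_integral_le_integral_sq (hW : W.Admissible Ω T δ ρ)
    (hΩ : MeasurableSet Ω) (hΩb : Bornology.IsBounded Ω) (hT : 0 ≤ T)
    (hb : W.BoundedOn (Ω ×ˢ Icc 0 T) a₀ A) (hs : 1 ≤ s)
    (hsA : A ≤ s * (a₀ ^ 3 * ((1 - W.β) * δ ^ 2)))
    (hsq : A ≤ s * (a₀ * (W.β * T - ρ)) ^ 2) (hcube : A ≤ s * (a₀ * (W.β * T - ρ)) ^ 3)
    (hw : IsTestFunction Ω w) {c : ℝ} (hc₁ : c ≤ 1)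
    (hc : c ≤ min (a₀ * (1 - W.β)) (a₀ ^ 3 * ((1 - W.β) * δ ^ 2) / 2)) :
    c * ∫ q in Ω ×ˢ Ioo 0 T, (W.symmPart s w q ^ 2 + density s w q) ≤
      ∫ q in Ω ×ˢ Ioo 0 T, (W.symmPart s w q + W.skewPart s w q) ^ 2 := by
  have hsmooth := hw.contDiff
  have hQ : Bornology.IsBounded (Ω ×ˢ Ioo 0 T) := hΩb.prod (Metric.isBounded_Ioo 0 T)
  have hdiv : ContDiff ℝ ∞ (spacetimeDiv (W.timeFlux s w) (W.spaceFlux s w)) := by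
    unfold spacetimeDiv; fun_prop
  have hflux := hW.setIntegral_spacetimeDiv_flux_nonneg hΩ hΩb hT hb hs hsq hcube hw
  calc c * ∫ q in Ω ×ˢ Ioo 0 T, (W.symmPart s w q ^ 2 + density s w q)
      ≤ ∫ q in Ω ×ˢ Ioo 0 T, (c * (W.symmPart s w q ^ 2 + density s w q)
        + 2 * spacetimeDiv (W.timeFlux s w) (W.spaceFlux s w) q) := by
        rw [← integral_const_mul, integral_add (integrableOn_of_continuous (by fun_prop) hQ)
          (integrableOn_of_continuous (by fun_prop) hQ), integral_const_mul 2]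
        exact le_add_of_nonneg_right (mul_nonneg zero_le_two hflux)
    _ ≤ ∫ q in Ω ×ˢ Ioo 0 T, (W.symmPart s w q + W.skewPart s w q) ^ 2 :=
        setIntegral_mono_on (integrableOn_of_continuous (by fun_prop) hQ)
          (integrableOn_of_continuous (by fun_prop) hQ) (hΩ.prod measurableSet_Ioo)
          fun q hq => hW.le_sq_symmPart_add_skewPart hb hs hsA hsmooth
            ⟨hq.1, Ioo_subset_Icc_self hq.2⟩ hq.1 hc₁ hc

theorem BoundedOn.sq_symmPart_add_skewPart_le (hb : W.BoundedOn S a₀ A) (hβ : W.β ∈ Ioo 0 1)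
    (hs : 0 ≤ s) (hz : ContDiff ℝ ∞ z) (hw : w = fun q => exp (s * W.weight q) * z q) (hq : q ∈ S)
    {p m : ℝ} (hp : |p| ≤ m) :
    (W.symmPart s w q + W.skewPart s w q) ^ 2 ≤
      2 * (exp (s * W.weight q) * (box z q + p * z q)) ^ 2 + 2 * (m + 2 * A * s) ^ 2 * w q ^ 2 := by
  have hα : 0 ≤ W.amplitude q := hb.lower_pos.le.trans (hb.le_amplitude q hq)
  have hcoeff : |p + (1 + W.β) * (s * W.amplitude q)| ≤ m + 2 * A * s := by
    calc |p + (1 + W.β) * (s * W.amplitude q)| ≤ |p| + |(1 + W.β) * (s * W.amplitude q)| :=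
          abs_add_le _ _
      _ = |p| + (1 + W.β) * (s * W.amplitude q) := by
          rw [abs_of_nonneg (mul_nonneg (by linarith [hβ.1]) (mul_nonneg hs hα))]
      _ ≤ m + 2 * (s * A) := by
          gcongr
          · linarith [hβ.2]
          · exact hb.amplitude_le q hq
      _ = m + 2 * A * s := by ring
  have hsplit : exp (s * W.weight q) * (box z q + p * z q) =
      W.symmPart s w q + W.skewPart s w q + (p + (1 + W.β) * (s * W.amplitude q)) * w q := by
    rw [mul_add, W.exp_mul_box_eq s hz hw, hw]
    ring
  have hsq := mul_le_mul_of_nonneg_right (sq_le_sq' (abs_le.1 hcoeff).1 (abs_le.1 hcoeff).2)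
    (sq_nonneg (w q))
  rw [hsplit]
  linarith [sq_nonneg (W.symmPart s w q + W.skewPart s w q
    + 2 * ((p + (1 + W.β) * (s * W.amplitude q)) * w q))]

theorem integrableOn_sq_exp_mul_box_add (hS : Bornology.IsBounded S) (hz : ContDiff ℝ ∞ z)
    {p : SpaceTime n → ℝ} {m : ℝ} (hp : AEStronglyMeasurable p (volume.restrict S))
    (hpm : ∀ᵐ q ∂volume.restrict S, |p q| ≤ m) :
    IntegrableOn (fun q => (exp (s * W.weight q) * (box z q + p q * z q)) ^ 2) S := by
  have hexpand : (fun q => (exp (s * W.weight q) * (box z q + p q * z q)) ^ 2) = fun q =>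
      (exp (s * W.weight q) * box z q) ^ 2 + p q * (exp (s * W.weight q) ^ 2 * (2 * box z q * z q))
        + p q * (p q * (exp (s * W.weight q) * z q) ^ 2) := by
    ext q; ring
  rw [hexpand]
  exact ((integrableOn_of_continuous (by fun_prop) hS).add
    ((integrableOn_of_continuous (by fun_prop) hS).bdd_mul hp hpm)).add
    (((integrableOn_of_continuous (by fun_prop) hS).bdd_mul hp hpm).bdd_mul hp hpm)

theorem BoundedOn.integral_sq_symmPart_add_skewPart_le (hb : W.BoundedOn S a₀ A)
    (hS : Bornology.IsBounded S) (hSm : MeasurableSet S) (hβ : W.β ∈ Ioo 0 1) (hs : 0 ≤ s)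
    (hz : ContDiff ℝ ∞ z) (hw : w = fun q => exp (s * W.weight q) * z q)
    {p : SpaceTime n → ℝ} {m : ℝ} (hp : AEStronglyMeasurable p (volume.restrict S))
    (hpm : ∀ᵐ q ∂volume.restrict S, |p q| ≤ m) :
    ∫ q in S, (W.symmPart s w q + W.skewPart s w q) ^ 2 ≤
      2 * (∫ q in S, (exp (s * W.weight q) * (box z q + p q * z q)) ^ 2)
        + 2 * (m + 2 * A * s) ^ 2 * ∫ q in S, w q ^ 2 := by
  have hsmooth : ContDiff ℝ ∞ w := by rw [hw]; fun_prop
  have hD := (W.integrableOn_sq_exp_mul_box_add (s := s) hS hz hp hpm).const_mul 2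
  have hw₂ : IntegrableOn (fun q => 2 * (m + 2 * A * s) ^ 2 * w q ^ 2) S :=
    integrableOn_of_continuous (by fun_prop) hS
  rw [← integral_const_mul, ← integral_const_mul, ← integral_add hD hw₂]
  refine integral_mono_ae (integrableOn_of_continuous (by fun_prop) hS) (hD.add hw₂) ?_
  filter_upwards [hpm, ae_restrict_mem hSm] with q hpq hq
  exact hb.sq_symmPart_add_skewPart_le hβ hs hz hw hq hpq

theorem pow_three_mul_integral_sq_le (hS : Bornology.IsBounded S) (hs : 0 ≤ s)
    (hw : ContDiff ℝ ∞ w) :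
    s ^ 3 * ∫ q in S, w q ^ 2 ≤ ∫ q in S, (W.symmPart s w q ^ 2 + density s w q) := by
  rw [← integral_const_mul]
  refine integral_mono (integrableOn_of_continuous (by fun_prop) hS)
    (integrableOn_of_continuous (by fun_prop) hS) fun q => ?_
  have hfirst := mul_nonneg hs (add_nonneg (sq_nonneg (∂ₜ w q)) (gradInner_self_nonneg w q))
  simp only [density]
  linarith [sq_nonneg (W.symmPart s w q)]

theorem Admissible.exists_density_estimate (hW : W.Admissible Ω T δ ρ) (hΩ : MeasurableSet Ω)
    (hΩb : Bornology.IsBounded Ω) (hb : W.BoundedOn (Ω ×ˢ Icc 0 T) a₀ A) :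
    ∃ M > 0, ∀ m : ℝ, ∀ᶠ s in Filter.atTop, ∀ p : SpaceTime n → ℝ,
      AEStronglyMeasurable p (volume.restrict (Ω ×ˢ Ioo 0 T)) →
      (∀ᵐ q ∂volume.restrict (Ω ×ˢ Ioo 0 T), |p q| ≤ m) → ∀ z, IsTestFunction Ω z →
        ∀ w, w = (fun q => exp (s * W.weight q) * z q) →
        ∫ q in Ω ×ˢ Ioo 0 T, (W.symmPart s w q ^ 2 + density s w q) ≤
          M * ∫ q in Ω ×ˢ Ioo 0 T, (exp (s * W.weight q) * (box z q + p q * z q)) ^ 2 := by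
  have hβ : 0 < 1 - W.β := sub_pos.2 hW.beta_mem.2
  have hκ : 0 < W.β * T - ρ := sub_pos.2 hW.rho_lt
  have hδ := hW.delta_pos
  have ha₀ := hb.lower_pos
  have hT : 0 ≤ T := (pos_of_mul_pos_right (hW.rho_pos.trans hW.rho_lt) hW.beta_mem.1.le).le
  let c := min 1 (min (a₀ * (1 - W.β)) (a₀ ^ 3 * ((1 - W.β) * δ ^ 2) / 2))
  have hc : 0 < c := by positivity
  refine ⟨4 / c, by positivity, fun m => ?_⟩
  filter_upwards [Filter.eventually_ge_atTop 1, Filter.eventually_ge_atTop |m|,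
    eventually_le_mul_atTop (4 * (1 + 2 * A) ^ 2) hc,
    eventually_le_mul_atTop A (by positivity : 0 < a₀ ^ 3 * ((1 - W.β) * δ ^ 2)),
    eventually_le_mul_atTop A (by positivity : 0 < (a₀ * (W.β * T - ρ)) ^ 2),
    eventually_le_mul_atTop A (by positivity : 0 < (a₀ * (W.β * T - ρ)) ^ 3)]
    with s hs hsm hsc hsA hsq hcube p hp hpm z hz w hw
  have hs₀ : 0 ≤ s := zero_le_one.trans hs
  have hwtest : IsTestFunction Ω w := hw ▸ hz.mul_left (by fun_prop)
  have hQ : Bornology.IsBounded (Ω ×ˢ Ioo 0 T) := hΩb.prod (Metric.isBounded_Ioo 0 T)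
  have hbulk := hW.mul_integral_le_integral_sq hΩ hΩb hT hb hs hsA hsq hcube hwtest
    (min_le_left _ _) (min_le_right _ _)
  have hbQ : W.BoundedOn (Ω ×ˢ Ioo 0 T) a₀ A := hb.mono (prod_mono_right Ioo_subset_Icc_self)
  have hupper := hbQ.integral_sq_symmPart_add_skewPart_le hQ (hΩ.prod measurableSet_Ioo)
    hW.beta_mem hs₀ hz.contDiff hw hp hpm
  exact le_four_div_mul_of_absorb hc hs hsm (mul_nonneg zero_le_two hb.upper_nonneg) hsc
    (integral_nonneg fun q => sq_nonneg (w q))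
    (W.pow_three_mul_integral_sq_le hQ hs₀ hwtest.contDiff) hbulk hupper

theorem IsTestFunction.initial_timeDeriv_exp_mul (hz : IsTestFunction Ω z)
    (x : EuclideanSpace ℝ (Fin n)) :
    ∂ₜ (fun q => exp (s * W.weight q) * z q) (x, 0) = exp (s * W.weight (x, 0)) * ∂ₜ z (x, 0) := by
  simp [dirDeriv_exp_mul (θ := fun q => s * W.weight q) (by fun_prop) hz.contDiff,
    hz.initial_eq_zero]

theorem Admissible.exists_velocity_estimate (hW : W.Admissible Ω T δ ρ) (hΩ : MeasurableSet Ω)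
    (hΩb : Bornology.IsBounded Ω) :
    ∃ M > 0, ∀ m : ℝ, ∀ᶠ s in Filter.atTop, ∀ p : SpaceTime n → ℝ,
      AEStronglyMeasurable p (volume.restrict (Ω ×ˢ Ioo 0 T)) →
      (∀ᵐ q ∂volume.restrict (Ω ×ˢ Ioo 0 T), |p q| ≤ m) → ∀ z, IsTestFunction Ω z →
        √s * ∫ x in Ω, (exp (s * W.weight (x, 0)) * ∂ₜ z (x, 0)) ^ 2 ≤
          M * ∫ q in Ω ×ˢ Ioo 0 T, (exp (s * W.weight q) * (box z q + p q * z q)) ^ 2 := by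
  have hT : 0 < T := pos_of_mul_pos_right (hW.rho_pos.trans hW.rho_lt) hW.beta_mem.1.le
  obtain ⟨a₀, A, hb⟩ := W.exists_boundedOn hW.l_pos (hΩb.prod (Metric.isBounded_Icc 0 T))
  obtain ⟨M, hM, hdensity⟩ := hW.exists_density_estimate hΩ hΩb hb
  have hA := hb.upper_nonneg
  refine ⟨2 / T * ((1 + T) * (1 + A) * M), by positivity, fun m => ?_⟩
  filter_upwards [Filter.eventually_ge_atTop 1, hdensity m] with s hs hdensity p hp hpm z hz
  have hvelocity := hb.sqrt_mul_integral_velocity_le hΩ hΩb hT.le hs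
    (hz.mul_left (u := fun q => exp (s * W.weight q)) (by fun_prop))
  have henergy := mul_le_mul_of_nonneg_left (hdensity p hp hpm z hz _ rfl)
    (by positivity : 0 ≤ (1 + T) * (1 + A))
  simp only [hz.initial_timeDeriv_exp_mul] at hvelocity
  rw [mul_assoc (2 / T), div_mul_eq_mul_div, le_div_iff₀ hT]
  linarith

theorem exists_admissible {x₀ : EuclideanSpace ℝ (Fin n)} {β : ℝ} (hx₀ : x₀ ∉ closure Ω)
    (hΩb : Bornology.IsBounded Ω) (hβ : β ∈ Ioo 0 1)
    (htime : sSup ((fun x => ‖x - x₀‖) '' Ω) < β * T) (C₀ : ℝ) :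
    ∃ δ ρ, ∃ l₀ > 0, ∀ l ≥ l₀, Admissible ⟨x₀, β, C₀, l⟩ Ω T δ ρ := by
  obtain ⟨δ, hδ, hδΩ⟩ : ∃ δ > 0, ∀ x ∈ Ω, δ ≤ ‖x - x₀‖ := by
    simpa [Metric.mem_closure_iff, dist_comm x₀, dist_eq_norm] using hx₀
  have hbdd : BddAbove ((fun x => ‖x - x₀‖) '' Ω) := by
    obtain ⟨R, hR⟩ := hΩb.subset_closedBall x₀
    exact ⟨R, forall_mem_image.2 fun x hx => mem_closedBall_iff_norm.1 (hR hx)⟩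
  obtain ⟨ρ, hsup, hρ⟩ := exists_between htime
  have hb : 0 < (1 - β) * δ ^ 2 := mul_pos (sub_pos.2 hβ.2) (pow_pos hδ 2)
  refine ⟨δ, ρ, 1 / ((1 - β) * δ ^ 2), one_div_pos.2 hb, fun l hl => ?_⟩
  exact {
    beta_mem := hβ
    delta_pos := hδ
    rho_pos := (sSup_nonneg (forall_mem_image.2 fun x _ => norm_nonneg _)).trans_lt hsup
    rho_lt := hρ
    delta_le_norm := hδΩ
    norm_le_rho := fun x hx => (le_csSup hbdd (mem_image_of_mem _ hx)).trans hsup.le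
    one_le_l_mul := (div_le_iff₀ hb).1 hl }

theorem setIntegral_Ioo_zero_le {F : SpaceTime n → ℝ} (hF₀ : ∀ q, 0 ≤ F q)
    (hF : IntegrableOn F (Ω ×ˢ Ioo (-T) T)) (hT : 0 ≤ T) :
    ∫ q in Ω ×ˢ Ioo 0 T, F q ≤ ∫ t in Ioo (-T) T, ∫ x in Ω, F (x, t) := by
  calc ∫ q in Ω ×ˢ Ioo 0 T, F q ≤ ∫ q in Ω ×ˢ Ioo (-T) T, F q :=
        setIntegral_mono_set hF (.of_forall hF₀)
          (prod_mono_right (Ioo_subset_Ioo_left (neg_nonpos.2 hT))).eventuallyLE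
    _ = ∫ t in Ioo (-T) T, ∫ x in Ω, F (x, t) := by
        rw [Measure.volume_eq_prod, ← setIntegral_prod_swap]
        exact setIntegral_prod (fun q => F q.swap) hF.swap

theorem deriv_deriv_sub_lap (hz : ContDiff ℝ ∞ z) (x : EuclideanSpace ℝ (Fin n)) (t : ℝ) :
    deriv (deriv fun τ => z (x, τ)) t - lap (fun y => z (y, t)) x = box z (x, t) := by
  have htime : deriv (fun τ => z (x, τ)) = fun τ => ∂ₜ z (x, τ) :=
    funext fun τ => (hasDerivAt_timeSlice hz x τ).deriv
  rw [htime, (hasDerivAt_timeSlice (contDiff_dirDeriv hz _) x t).deriv]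
  simp only [lap, box, fderiv_spaceSlice hz, fderiv_spaceSlice (contDiff_dirDeriv hz _)]

theorem exp_two_mul_phi_mul_sq (x : EuclideanSpace ℝ (Fin n)) (t y : ℝ) :
    exp (2 * s * phi W.x₀ W.β W.C₀ W.l x t) * y ^ 2 = (exp (s * W.weight (x, t)) * y) ^ 2 := by
  rw [mul_pow, ← exp_nat_mul, weight, ← mul_assoc]
  rfl

theorem Admissible.exists_carleman_estimate (hW : W.Admissible Ω T δ ρ) (hΩ : MeasurableSet Ω)
    (hΩb : Bornology.IsBounded Ω) :
    ∃ M > 0, ∀ m : ℝ, ∀ᶠ s in Filter.atTop, ∀ p : SpaceTime n → ℝ,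
      AEStronglyMeasurable p (volume.restrict (Ω ×ˢ Ioo (-T) T)) →
      (∀ᵐ q ∂volume.restrict (Ω ×ˢ Ioo (-T) T), |p q| ≤ m) → ∀ z, IsTestFunction Ω z →
        √s * ∫ x in Ω, (exp (s * W.weight (x, 0)) * ∂ₜ z (x, 0)) ^ 2 ≤
          M * ∫ t in Ioo (-T) T, ∫ x in Ω,
            (exp (s * W.weight (x, t)) * (box z (x, t) + p (x, t) * z (x, t))) ^ 2 := by
  have hT : 0 < T := pos_of_mul_pos_right (hW.rho_pos.trans hW.rho_lt) hW.beta_mem.1.le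
  have hsubset : Ω ×ˢ Ioo 0 T ⊆ Ω ×ˢ Ioo (-T) T :=
    prod_mono_right (Ioo_subset_Ioo_left (neg_nonpos.2 hT.le))
  obtain ⟨M, hM, hvelocity⟩ := hW.exists_velocity_estimate hΩ hΩb
  refine ⟨M, hM, fun m => (hvelocity m).mono fun s hs p hp hpm z hz => ?_⟩
  refine (hs p (hp.mono_set hsubset) (ae_restrict_of_ae_restrict_of_subset hsubset hpm) z hz).trans
    (mul_le_mul_of_nonneg_left (setIntegral_Ioo_zero_le (fun q => sq_nonneg _) ?_ hT.le) hM.le)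
  exact W.integrableOn_sq_exp_mul_box_add (hΩb.prod (Metric.isBounded_Ioo _ _)) hz.contDiff hp hpm

end CarlemanWeight

open CarlemanWeight in
theorem carleman_pointwise_at_zero_general {n : ℕ} {Ω : Set (EuclideanSpace ℝ (Fin n))}
    (hΩ : MeasurableSet Ω) (hΩb : Bornology.IsBounded Ω) {T : ℝ}
    {x₀ : EuclideanSpace ℝ (Fin n)} (hx₀ : x₀ ∉ closure Ω) {β : ℝ} (hβ : β ∈ Ioo 0 1)
    (htime : sSup ((fun x => ‖x - x₀‖) '' Ω) < β * T) (C₀ : ℝ) :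
    ∃ l₀ > 0, ∀ l ≥ l₀, ∃ M > 0, ∀ m : ℝ, ∃ s₀ > 0, ∀ p : SpaceTime n → ℝ,
      AEStronglyMeasurable p (volume.restrict (Ω ×ˢ Ioo (-T) T)) →
      (∀ᵐ q ∂volume.restrict (Ω ×ˢ Ioo (-T) T), |p q| ≤ m) → ∀ s ≥ s₀,
      ∀ z : EuclideanSpace ℝ (Fin n) → ℝ → ℝ, ContDiff ℝ ∞ (fun q : SpaceTime n => z q.1 q.2) →
        (∃ K, IsCompact K ∧ K ⊆ Ω ∧ ∀ x ∉ K, ∀ t, z x t = 0) → (∀ x ∈ Ω, z x 0 = 0) →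
        √s * (∫ x in Ω, exp (2 * s * phi x₀ β C₀ l x 0) * deriv (z x) 0 ^ 2) ≤
          M * ∫ t in Ioo (-T) T, ∫ x in Ω, exp (2 * s * phi x₀ β C₀ l x t) *
            (deriv (deriv (z x)) t - lap (fun y => z y t) x + p (x, t) * z x t) ^ 2 := by
  obtain ⟨δ, ρ, l₀, hl₀, hadmissible⟩ := exists_admissible hx₀ hΩb hβ htime C₀
  refine ⟨l₀, hl₀, fun l hl => ?_⟩
  obtain ⟨M, hM, hcarleman⟩ := (hadmissible l hl).exists_carleman_estimate hΩ hΩb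
  refine ⟨M, hM, fun m => ?_⟩
  obtain ⟨s₀, hs₀⟩ := Filter.eventually_atTop.1 (hcarleman m)
  refine ⟨max s₀ 1, by positivity, fun p hp hpm s hs z hz ⟨K, hK, hKΩ, hzK⟩ hz₀ => ?_⟩
  let Z (q : SpaceTime n) : ℝ := z q.1 q.2
  have htest : IsTestFunction Ω Z := ⟨hz, ⟨K, hKΩ, hK, fun q hq => hzK q.1 hq q.2⟩, fun x =>
    by_cases (hz₀ x) fun hx => hzK x (fun h => hx (hKΩ h)) 0⟩
  have hvelocity (x : EuclideanSpace ℝ (Fin n)) : deriv (z x) 0 = ∂ₜ Z (x, 0) :=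
    (hasDerivAt_timeSlice hz x 0).deriv
  have hbox (x : EuclideanSpace ℝ (Fin n)) (t : ℝ) :
      deriv (deriv (z x)) t - lap (fun y => z y t) x = box Z (x, t) := deriv_deriv_sub_lap hz x t
  simpa only [hvelocity, hbox, exp_two_mul_phi_mul_sq (W := ⟨x₀, β, C₀, l⟩)] using
    hs₀ s (le_of_max_le_left hs) p hp hpm Z htest

/-- **Carleman estimate with a pointwise velocity term at time `0`** (estimate (1.8) of
Theorem 1.2 / Theorem 2.10), specialized to functions supported, in the space variable, in a
compact subset of `Ω` and satisfying `z(·,0) = 0` on `Ω`: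
`s^{1/2}∫_Ω e^{2sφ(0)}|∂ₜz(0)|² ≤ M∫∫ e^{2sφ}|∂ₜ²z - Δz + pz|²`. -/
theorem carleman_pointwise_at_zero
    (n : ℕ) (hn : 1 ≤ n)
    (Ω : Set (EuclideanSpace ℝ (Fin n))) (hΩo : IsOpen Ω) (hΩb : Bornology.IsBounded Ω)
    (T : ℝ) (hT : 0 < T)
    (x₀ : EuclideanSpace ℝ (Fin n)) (hx₀ : x₀ ∉ closure Ω)
    (β : ℝ) (hβ : β ∈ Set.Ioo (0:ℝ) 1)
    (htime : sSup ((fun x => ‖x - x₀‖) '' Ω) < β * T)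
    (C₀ : ℝ) (hC₀ : 0 < C₀)
    (hψ : ∀ x ∈ Ω, ∀ t ∈ Set.Ioo (-T) T, 1 ≤ psi x₀ β C₀ x t) :
    ∃ l > (0:ℝ), ∀ m > (0:ℝ), ∃ s₀ > (0:ℝ), ∃ M > (0:ℝ),
      ∀ p : EuclideanSpace ℝ (Fin n) × ℝ → ℝ, Measurable p →
        (∀ᵐ q ∂((volume : Measure (EuclideanSpace ℝ (Fin n) × ℝ)).restrict
            (Ω ×ˢ Set.Ioo (-T) T)), |p q| ≤ m) →
      ∀ s ≥ s₀,
      ∀ z : EuclideanSpace ℝ (Fin n) → ℝ → ℝ,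
        ContDiff ℝ (⊤ : ℕ∞) (fun q : EuclideanSpace ℝ (Fin n) × ℝ => z q.1 q.2) →
        (∃ K : Set (EuclideanSpace ℝ (Fin n)), IsCompact K ∧ K ⊆ Ω ∧
          ∀ x ∉ K, ∀ t : ℝ, z x t = 0) →
        (∀ x ∈ Ω, z x 0 = 0) →
        Real.sqrt s * (∫ x in Ω,
            Real.exp (2 * s * phi x₀ β C₀ l x 0) * (deriv (z x) 0) ^ 2)
        ≤ M * ∫ t in Set.Ioo (-T) T, ∫ x in Ω, Real.exp (2 * s * phi x₀ β C₀ l x t) *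
            (deriv (deriv (z x)) t - lap (fun y => z y t) x + p (x, t) * z x t) ^ 2 := by
  obtain ⟨l, hl, h⟩ := carleman_pointwise_at_zero_general hΩo.measurableSet hΩb hx₀ hβ htime C₀
  obtain ⟨M, hM, hcarleman⟩ := h l le_rfl
  exact ⟨l, hl, fun m _ => let ⟨s₀, hs₀, hs⟩ := hcarleman m
    ⟨s₀, hs₀, M, hM, fun p hp => hs p hp.aestronglyMeasurable⟩⟩
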